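/- Let d ≥ 3 and let 𝔢 be a dispersion relation of class C³ whose critical points are all nondegenerate. For all constants K > 0 and C < ∞ with K(𝔢) ≥ K and ‖𝔢‖_{C³} ≤ C, there exists a constant c < ∞ depending only on K and C such that for every potential V : Γ → ℝ, every function V^{1/2} : Γ → ℂ with (V^{1/2}(x))² = V(x) for all x, and every z ∈ ℂ∖ℝ, the operator T on ℓ²(Γ) with matrix elements ⟨δ_x, T δ_y⟩ = V^{1/2}(x)·⟨g_x, (z − h(𝔢))^{−1} g_y⟩·V^{1/2}(y) is bounded with operator norm ‖T‖ ≤ c·Φ_{2,3}(V). -/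

import Mathlib

open MeasureTheory Complex Real
open scoped ENNReal

noncomputable section

namespace LatSch

/-- The lattice `Γ = ℤ^d`. -/
abbrev Γd (d : ℕ) := Fin d → ℤ

/-- The Hilbert space `ℓ²(Γ)`. -/
abbrev L2 (d : ℕ) := lp (fun _ : Γd d => ℂ) 2

/-- Euclidean norm of a lattice point. -/
def lnorm {d : ℕ} (x : Γd d) : ℝ := Real.sqrt (∑ i, ((x i : ℝ)) ^ 2)

/-- The standard basis vector `δ_x` of `ℓ²(Γ)`. -/
def delta {d : ℕ} (x : Γd d) : L2 d := lp.single 2 x 1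

local notation "⟪" a ", " b "⟫" => @inner ℂ _ _ a b

/-- The cube `[-π, π]^d`, a fundamental domain of the torus. -/
def torusBox (d : ℕ) : Set (Fin d → ℝ) := Set.univ.pi fun _ => Set.Icc (-π) π

/-- `⟨p, m⟩` for `p ∈ ℝ^d`, `m ∈ ℤ^d`. -/
def dotZ {d : ℕ} (p : Fin d → ℝ) (m : Γd d) : ℝ := ∑ i, p i * (m i : ℝ)

/-- Fourier coefficient `f̂(m) = (2π)^{-d} ∫_{[-π,π]^d} f(p) e^{i⟨p,m⟩} dp`. -/
def fCoeff {d : ℕ} (f : (Fin d → ℝ) → ℝ) (m : Γd d) : ℂ :=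
  ((1 / (2 * π) ^ d : ℝ) : ℂ) *
    ∫ p in torusBox d, (f p : ℂ) * Complex.exp (Complex.I * (dotZ p m : ℝ))

/-- `H` is the Fourier multiplier (hopping matrix) `h(f)`, characterized by its
matrix elements `⟨δ_x, H δ_y⟩ = f̂(x - y)`. -/
def IsMultiplier {d : ℕ} (f : (Fin d → ℝ) → ℝ) (H : L2 d →L[ℂ] L2 d) : Prop :=
  ∀ x y : Γd d, ⟪delta x, H (delta y)⟫ = fCoeff f (x - y)

/-- `M` is the operator of multiplication by the potential `V`. -/
def IsMulOp {d : ℕ} (V : Γd d → ℝ) (M : L2 d →L[ℂ] L2 d) : Prop :=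
  ∀ (ψ : L2 d) (x : Γd d), (M ψ : ∀ _ : Γd d, ℂ) x = (V x : ℂ) * (ψ : ∀ _ : Γd d, ℂ) x

/-- Partial derivative `∂_{p_k} f (p)`. -/
def pd {d : ℕ} (f : (Fin d → ℝ) → ℝ) (k : Fin d) (p : Fin d → ℝ) : ℝ :=
  fderiv ℝ f p (Pi.single k 1)

/-- `|∇f|²(p) = Σ_k (∂_{p_k} f(p))²`. -/
def gradSq {d : ℕ} (f : (Fin d → ℝ) → ℝ) (p : Fin d → ℝ) : ℝ := ∑ k, pd f k p ^ 2

/-- The Hessian matrix of `f` at `p`. -/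
def hess {d : ℕ} (f : (Fin d → ℝ) → ℝ) (p : Fin d → ℝ) : Matrix (Fin d) (Fin d) ℝ :=
  Matrix.of fun i j => fderiv ℝ (fun q => fderiv ℝ f q (Pi.single j 1)) p (Pi.single i 1)

/-- All critical points of `f` are nondegenerate (`f` is a Morse function). -/
def IsMorse {d : ℕ} (f : (Fin d → ℝ) → ℝ) : Prop :=
  ∀ p, fderiv ℝ f p = 0 → (hess f p).det ≠ 0

/-- `2πℤ^d`-periodicity. -/
def Periodic2pi {d : ℕ} (f : (Fin d → ℝ) → ℝ) : Prop :=
  ∀ (p : Fin d → ℝ) (m : Γd d), f (p + fun i => 2 * π * (m i : ℝ)) = f p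

/-- A dispersion relation: a `2πℤ^d`-periodic function with minimum `0`. -/
def IsDispersion {d : ℕ} (f : (Fin d → ℝ) → ℝ) : Prop :=
  Periodic2pi f ∧ (∀ p, 0 ≤ f p) ∧ (∃ p, f p = 0)

/-- Condition (M): `𝔢` and `|∇𝔢|²` are Morse functions. -/
def CondM {d : ℕ} (f : (Fin d → ℝ) → ℝ) : Prop := IsMorse f ∧ IsMorse (gradSq f)

/-- `Φ_{m,n}(V) = (Σ_x |V(x)|^{1/m} (1+|x|)^n)^m`, valued in `[0,∞]`. -/
def Phi {d : ℕ} (m n : ℕ) (V : Γd d → ℝ) : ℝ≥0∞ :=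
  (∑' x : Γd d, ENNReal.ofReal (|V x| ^ ((1 : ℝ) / m) * (1 + lnorm x) ^ n)) ^ m

/-- The set of eigenvectors of `H` (with real eigenvalue). -/
def eigvecs {d : ℕ} (H : L2 d →L[ℂ] L2 d) : Set (L2 d) :=
  {ψ : L2 d | ψ ≠ 0 ∧ ∃ μ : ℝ, H ψ = (μ : ℂ) • ψ}

/-- `N_pp[H]`: the Hilbert-space dimension of the closed linear span of all
eigenvectors of `H`. -/
def Npp {d : ℕ} (H : L2 d →L[ℂ] L2 d) : Cardinal :=
  Module.rank ℂ ((Submodule.span ℂ (eigvecs H)).topologicalClosure)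

/-- The Fourier transform `ĝ_x(p) = (i/2·|∇𝔢(p)|² + ⟨∇𝔢(p), x⟩) e^{-i⟨p,x⟩}`. -/
def ghat {d : ℕ} (e : (Fin d → ℝ) → ℝ) (x : Γd d) (p : Fin d → ℝ) : ℂ :=
  ((Complex.I / 2) * ((gradSq e p : ℝ) : ℂ) + ((∑ k, pd e k p * (x k : ℝ) : ℝ) : ℂ)) *
    Complex.exp (-(Complex.I * (dotZ p x : ℝ)))

/-- `g : Γ → ℓ²(Γ)` is the family of vectors `g_x` with Fourier transform `ĝ_x`. -/
def IsGVec {d : ℕ} (e : (Fin d → ℝ) → ℝ) (g : Γd d → L2 d) : Prop :=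
  ∀ x m : Γd d,
    (g x : ∀ _ : Γd d, ℂ) m =
      ((1 / (2 * π) ^ d : ℝ) : ℂ) *
        ∫ p in torusBox d, ghat e x p * Complex.exp (Complex.I * (dotZ p m : ℝ))

/-- `C` is the bounded self-adjoint realization
`C_V = Σ_x i V(x) (|δ_x⟩⟨g_x| - |g_x⟩⟨δ_x|)` of the commutator `i[V, A(𝔢)]`. -/
def IsCommOp {d : ℕ} (V : Γd d → ℝ) (g : Γd d → L2 d) (C : L2 d →L[ℂ] L2 d) : Prop :=
  ∀ ψ : L2 d,
    HasSum (fun x : Γd d =>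
      (Complex.I * (V x : ℂ)) • (⟪g x, ψ⟫ • delta x - ⟪delta x, ψ⟫ • g x)) (C ψ)

/-- `R` is the resolvent `(z - H)^{-1}`. -/
def IsResolventAt {d : ℕ} (H : L2 d →L[ℂ] L2 d) (z : ℂ) (R : L2 d →L[ℂ] L2 d) : Prop :=
  R.comp (z • (1 : L2 d →L[ℂ] L2 d) - H) = 1 ∧ (z • (1 : L2 d →L[ℂ] L2 d) - H).comp R = 1

/-- `‖f‖_{C^m} ≤ C`: all partial derivatives of order `≤ m` are bounded by `C`. -/
def CmNormLe {d : ℕ} (m : ℕ) (f : (Fin d → ℝ) → ℝ) (C : ℝ) : Prop :=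
  ∀ j : ℕ, j ≤ m → ∀ (p : Fin d → ℝ) (k : Fin j → Fin d),
    |iteratedFDeriv ℝ j f p (fun i => Pi.single (k i) 1)| ≤ C

/-- `K(𝔢) ≥ K`: at every critical point, every eigenvalue `λ` of the Hessian
satisfies `|λ|^{1/2} ≥ K`. -/
def MinCurvGe {d : ℕ} (f : (Fin d → ℝ) → ℝ) (K : ℝ) : Prop :=
  ∀ p, fderiv ℝ f p = 0 → ∀ (lam : ℝ) (v : Fin d → ℝ), v ≠ 0 →
    (hess f p).mulVec v = lam • v → K ^ 2 ≤ |lam|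

/-- The set of thresholds `Thr(𝔢) = 𝔢(Crit(𝔢))`. -/
def Thr {d : ℕ} (f : (Fin d → ℝ) → ℝ) : Set ℝ := f '' {p | fderiv ℝ f p = 0}


/-- The number of strictly negative eigenvalues of `C`, counted with multiplicity:
the dimension of the span of eigenvectors with strictly negative eigenvalue. -/
def NegCount {d : ℕ} (C : L2 d →L[ℂ] L2 d) : Cardinal :=
  Module.rank ℂ (Submodule.span ℂ
    {ψ : L2 d | ψ ≠ 0 ∧ ∃ μ : ℝ, μ < 0 ∧ C ψ = (μ : ℂ) • ψ})

/-- The number of strictly positive eigenvalues of `C`, counted with multiplicity. -/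
def PosCount {d : ℕ} (C : L2 d →L[ℂ] L2 d) : Cardinal :=
  Module.rank ℂ (Submodule.span ℂ
    {ψ : L2 d | ψ ≠ 0 ∧ ∃ μ : ℝ, 0 < μ ∧ C ψ = (μ : ℂ) • ψ})



section secD1
/-- strong convexity in three-point form -/
lemma sc_ineq {u u1 u2 : ℝ → ℝ} {κ : ℝ}
    (h1 : ∀ s, HasDerivAt u (u1 s) s) (h2 : ∀ s, HasDerivAt u1 (u2 s) s)
    (hκ : ∀ s ∈ Set.Icc (0:ℝ) 1, κ ≤ u2 s) :
    ConvexOn ℝ (Set.Icc (0:ℝ) 1) (fun s => u s - κ / 2 * s ^ 2) := by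
  have hd1 : ∀ s, HasDerivAt (fun s => u s - κ / 2 * s ^ 2) (u1 s - κ * s) s := by
    intro s
    have := (h1 s).sub (((hasDerivAt_id s).pow 2).const_mul (κ/2))
    exact this.congr_deriv (by simp; ring)
  have hd2 : ∀ s, HasDerivAt (fun s => u1 s - κ * s) (u2 s - κ) s := by
    intro s
    have := (h2 s).sub ((hasDerivAt_id s).const_mul κ)
    exact this.congr_deriv (by simp)
  have e1 : deriv (fun s => u s - κ / 2 * s ^ 2) = fun s => u1 s - κ * s := by
    ext s; exact (hd1 s).deriv
  apply convexOn_of_deriv2_nonneg (convex_Icc 0 1)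
  · exact fun s _ => (hd1 s).continuousAt.continuousWithinAt
  · exact fun s _ => (hd1 s).differentiableAt.differentiableWithinAt
  · rw [e1]; exact fun s _ => (hd2 s).differentiableAt.differentiableWithinAt
  · intro s hs
    rw [interior_Icc] at hs
    simp only [Function.iterate_succ, Function.iterate_zero, Function.comp, id]
    rw [e1, (hd2 s).deriv]
    linarith [hκ s ⟨hs.1.le, hs.2.le⟩]

lemma two_pts_convex {u u1 u2 : ℝ → ℝ} {κ : ℝ} (hκ0 : 0 < κ)
    (h1 : ∀ s, HasDerivAt u (u1 s) s) (h2 : ∀ s, HasDerivAt u1 (u2 s) s)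
    (hκ : ∀ s ∈ Set.Icc (0:ℝ) 1, κ ≤ u2 s) :
    ∃ a b : ℝ, a ∈ Set.Icc (0:ℝ) 1 ∧ b ∈ Set.Icc (0:ℝ) 1 ∧
      ∀ s ∈ Set.Icc (0:ℝ) 1, κ / 4 * (|s - a| * |s - b|) ≤ |u s| := by
  have hc := (sc_ineq h1 h2 hκ).2
  have hcont : Continuous u := continuous_iff_continuousAt.2 fun s => (h1 s).continuousAt
  -- three-point inequality: x<y<w
  have key : ∀ x ∈ Set.Icc (0:ℝ) 1, ∀ w ∈ Set.Icc (0:ℝ) 1, ∀ y, x ≤ y → y ≤ w →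
      (w - x) * u y ≤ (w - y) * u x + (y - x) * u w - κ / 2 * ((w - x) * ((y - x) * (w - y))) := by
    intro x hx w hw y hxy hyw
    rcases eq_or_lt_of_le (hxy.trans hyw) with h | h
    · have : y = x := by linarith
      subst this; subst h; simp
    have hpos : 0 < w - x := by linarith
    have := hc hx hw (a := (w - y)/(w-x)) (b := (y-x)/(w-x)) (by apply div_nonneg <;> linarith)
      (by apply div_nonneg <;> linarith) (by field_simp; ring)
    simp only [smul_eq_mul] at this
    have hy : (w - y)/(w-x) * x + (y-x)/(w-x) * w = y := by field_simp; ring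
    rw [hy] at this
    have := mul_le_mul_of_nonneg_left this hpos.le
    have e2 : (w - x) * ((w - y) / (w - x) * (u x - κ / 2 * x ^ 2) + (y - x) / (w - x) * (u w - κ / 2 * w ^ 2)) = (w - y) * (u x - κ / 2 * x ^ 2) + (y - x) * (u w - κ / 2 * w ^ 2) := by
      field_simp
    rw [e2] at this
    nlinarith [this]
  by_cases hneg : ∀ s ∈ Set.Icc (0:ℝ) 1, 0 ≤ u s
  · obtain ⟨m, hm, hmin⟩ := isCompact_Icc.exists_isMinOn (Set.nonempty_Icc.2 zero_le_one) hcont.continuousOn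
    refine ⟨m, m, hm, hm, fun s hs => ?_⟩
    rw [abs_of_nonneg (hneg s hs), ← abs_mul, abs_of_nonneg (mul_self_nonneg _)]
    have hu := hmin
    rw [isMinOn_iff] at hu
    have h0 := hneg m hm
    rcases le_total m s with h | h
    · have := key m hm s hs ((m+s)/2) (by linarith) (by linarith)
      have h3 := hu ((m+s)/2) ⟨by linarith [hm.1, hs.1], by linarith [hm.2, hs.2]⟩
      rcases eq_or_lt_of_le h with h' | h'
      · subst h'; simpa using h0
      have hpos : 0 < s - m := by linarith
      have h4 : (s-m) * (κ / 4 * ((s - m) * (s - m))) ≤ (s-m) * u s := by nlinarith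
      exact le_of_mul_le_mul_left h4 hpos
    · have := key s hs m hm ((m+s)/2) (by linarith) (by linarith)
      have h3 := hu ((m+s)/2) ⟨by linarith [hm.1, hs.1], by linarith [hm.2, hs.2]⟩
      rcases eq_or_lt_of_le h with h' | h'
      · subst h'; simpa using h0
      have hpos : 0 < m - s := by linarith
      have h4 : (m-s) * (κ / 4 * ((s - m) * (s - m))) ≤ (m-s) * u s := by nlinarith
      exact le_of_mul_le_mul_left h4 hpos
  · push Not at hneg
    obtain ⟨s0, hs0, hus0⟩ := hneg
    set S := Set.Icc (0:ℝ) 1 ∩ {s | u s ≤ 0} with hS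
    have hSc : IsCompact S := isCompact_Icc.inter_right (isClosed_le hcont continuous_const)
    have hSne : S.Nonempty := ⟨s0, hs0, hus0.le⟩
    obtain ⟨a, haS, ha⟩ := hSc.exists_isLeast hSne
    obtain ⟨b, hbS, hb⟩ := hSc.exists_isGreatest hSne
    have hab : a ≤ b := ha hbS
    have has0 : a ≤ s0 := ha ⟨hs0, hus0.le⟩
    have hbs0 : s0 ≤ b := hb ⟨hs0, hus0.le⟩
    -- zero at a unless a = 0
    have ha0 : a = 0 ∨ 0 ≤ u a := by
      by_contra hcon
      push Not at hcon
      have hapos : 0 < a := lt_of_le_of_ne haS.1.1 (Ne.symm hcon.1)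
      have hev : ∀ᶠ s in nhds a, u s < 0 ∧ 0 < s :=
        (hcont.continuousAt.eventually_lt continuousAt_const hcon.2).and (lt_mem_nhds hapos)
      have hev2 := (hev.filter_mono nhdsWithin_le_nhds : ∀ᶠ s in nhdsWithin a (Set.Iio a), _)
      obtain ⟨s, hs, hsa⟩ := (hev2.and self_mem_nhdsWithin).exists
      have := ha ⟨⟨hs.2.le, by linarith [haS.1.2, (show s < a from hsa)]⟩, hs.1.le⟩
      exact absurd hsa (not_lt.2 this)
    have hb0 : b = 1 ∨ 0 ≤ u b := by
      by_contra hcon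
      push Not at hcon
      have hbpos : b < 1 := lt_of_le_of_ne hbS.1.2 hcon.1
      have hev : ∀ᶠ s in nhds b, u s < 0 ∧ s < 1 :=
        (hcont.continuousAt.eventually_lt continuousAt_const hcon.2).and (gt_mem_nhds hbpos)
      have hev2 := (hev.filter_mono nhdsWithin_le_nhds : ∀ᶠ s in nhdsWithin b (Set.Ioi b), _)
      obtain ⟨s, hs, hsa⟩ := (hev2.and self_mem_nhdsWithin).exists
      have := hb ⟨⟨by linarith [hbS.1.1, (show b < s from hsa)], hs.2.le⟩, hs.1.le⟩
      exact absurd hsa (not_lt.2 this)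
    have hua : u a ≤ 0 := haS.2
    have hub : u b ≤ 0 := hbS.2
    have hlt : a < b := by
      rcases eq_or_lt_of_le hab with h | h
      · have e1 : a = s0 := le_antisymm has0 (h ▸ hbs0)
        have e2 : b = s0 := by linarith
        rcases ha0 with h3 | h3
        · rcases hb0 with h4 | h4
          · linarith
          · rw [e2] at h4; linarith
        · rw [e1] at h3; linarith
      · exact h
    refine ⟨a, b, haS.1, hbS.1, fun s hs => ?_⟩
    rcases lt_or_ge s a with h | h
    · -- s < a
      have hua0 : u a = 0 := by
        rcases ha0 with h3 | h3
        · linarith [hs.1]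
        · linarith
      have k := key s hs b hbS.1 a h.le hab
      rw [abs_of_neg (by linarith), abs_of_neg (by linarith)]
      refine le_trans ?_ (le_abs_self _)
      rw [hua0] at k
      have h4 : (b - a) * (κ / 4 * (-(s - a) * -(s - b))) ≤ (b - a) * u s := by
        have p1 : 0 ≤ κ * ((b - s) * ((a - s) * (b - a))) := by
          have : 0 ≤ b - s := by linarith
          have : 0 ≤ a - s := by linarith
          have : 0 ≤ b - a := by linarith
          positivity
        have p2 : (a - s) * u b ≤ 0 := mul_nonpos_of_nonneg_of_nonpos (by linarith) hub
        nlinarith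
      exact le_of_mul_le_mul_left h4 (by linarith)
    · rcases le_or_gt s b with h' | h'
      · have k := key a haS.1 b hbS.1 s h h'
        rw [abs_of_nonneg (by linarith : 0 ≤ s - a), abs_of_nonpos (by linarith : s - b ≤ 0)]
        refine le_trans ?_ (neg_le_abs _)
        have h4 : (b - a) * (κ / 4 * ((s - a) * -(s - b))) ≤ (b - a) * -u s := by
          have p1 : 0 ≤ κ * ((b - a) * ((s - a) * (b - s))) := by
            have : 0 ≤ b - s := by linarith
            have : 0 ≤ s - a := by linarith
            have : 0 ≤ b - a := by linarith
            positivity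
          have p2 : (b - s) * u a ≤ 0 := mul_nonpos_of_nonneg_of_nonpos (by linarith) hua
          have p3 : (s - a) * u b ≤ 0 := mul_nonpos_of_nonneg_of_nonpos (by linarith) hub
          nlinarith
        exact le_of_mul_le_mul_left h4 (by linarith)
      · have hub0 : u b = 0 := by
          rcases hb0 with h3 | h3
          · linarith [hs.2]
          · linarith
        have k := key a haS.1 s hs b hab h'.le
        rw [abs_of_pos (by linarith), abs_of_pos (by linarith)]
        refine le_trans ?_ (le_abs_self _)
        rw [hub0] at k
        have h4 : (b - a) * (κ / 4 * ((s - a) * (s - b))) ≤ (b - a) * u s := by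
          have p1 : 0 ≤ κ * ((s - a) * ((b - a) * (s - b))) := by
            have : 0 ≤ s - b := by linarith
            have : 0 ≤ s - a := by linarith
            have : 0 ≤ b - a := by linarith
            positivity
          have p2 : (s - b) * u a ≤ 0 := mul_nonpos_of_nonneg_of_nonpos (by linarith) hua
          nlinarith
        exact le_of_mul_le_mul_left h4 (by linarith)

lemma two_pts_mono {u u1 : ℝ → ℝ} {κ : ℝ} (hκ0 : 0 < κ)
    (h1 : ∀ s, HasDerivAt u (u1 s) s) (hκ : ∀ s ∈ Set.Icc (0:ℝ) 1, κ ≤ u1 s) :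
    ∃ a b : ℝ, a ∈ Set.Icc (0:ℝ) 1 ∧ b ∈ Set.Icc (0:ℝ) 1 ∧
      ∀ s ∈ Set.Icc (0:ℝ) 1, κ / 4 * (|s - a| * |s - b|) ≤ |u s| := by
  have hcont : Continuous u := continuous_iff_continuousAt.2 fun s => (h1 s).continuousAt
  have key : ∀ x ∈ Set.Icc (0:ℝ) 1, ∀ y ∈ Set.Icc (0:ℝ) 1, x ≤ y → κ * (y - x) ≤ u y - u x := by
    apply (convex_Icc (0:ℝ) 1).mul_sub_le_image_sub_of_le_deriv hcont.continuousOn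
    · exact fun s _ => (h1 s).differentiableAt.differentiableWithinAt
    · intro s hs
      rw [(h1 s).deriv]; exact hκ s (interior_subset hs)
  have fin : ∀ a ∈ Set.Icc (0:ℝ) 1, (∀ s ∈ Set.Icc (0:ℝ) 1, κ * |s - a| ≤ |u s|) →
      ∃ a b : ℝ, a ∈ Set.Icc (0:ℝ) 1 ∧ b ∈ Set.Icc (0:ℝ) 1 ∧
      ∀ s ∈ Set.Icc (0:ℝ) 1, κ / 4 * (|s - a| * |s - b|) ≤ |u s| := by
    intro a ha h
    refine ⟨a, a, ha, ha, fun s hs => le_trans ?_ (h s hs)⟩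
    have : |s - a| ≤ 1 := by rw [abs_le]; constructor <;> linarith [ha.1, ha.2, hs.1, hs.2]
    have h0 := abs_nonneg (s - a)
    have : |s - a| * |s - a| ≤ |s - a| := by nlinarith
    nlinarith
  rcases le_or_gt 0 (u 0) with h0 | h0
  · refine fin 0 (by simp) fun s hs => ?_
    have := key 0 (by simp) s hs hs.1
    rw [abs_of_nonneg (by linarith [hs.1])]
    exact le_trans (by linarith) (le_abs_self _)
  rcases le_or_gt (u 1) 0 with h1' | h1'
  · refine fin 1 (by simp) fun s hs => ?_
    have := key s hs 1 (by simp) hs.2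
    rw [abs_of_nonpos (by linarith [hs.2])]
    exact le_trans (by linarith) (neg_le_abs _)
  obtain ⟨a, ha, hua⟩ := intermediate_value_Icc zero_le_one hcont.continuousOn
    (show (0:ℝ) ∈ Set.Icc (u 0) (u 1) from ⟨h0.le, h1'.le⟩)
  refine fin a ha fun s hs => ?_
  rcases le_total a s with h | h
  · have := key a ha s hs h
    rw [abs_of_nonneg (by linarith)]
    exact le_trans (by linarith) (le_abs_self _)
  · have := key s hs a ha h
    rw [abs_of_nonpos (by linarith)]
    exact le_trans (by linarith) (neg_le_abs _)

end secD1

section secD2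
lemma sing_int : ∃ c0 : ℝ, 0 ≤ c0 ∧ ∀ a ∈ Set.Icc (0:ℝ) 1,
    ∫⁻ s in Set.Icc (0:ℝ) 1, ENNReal.ofReal (|s - a| ^ (-(1/2) : ℝ)) ≤ ENNReal.ofReal c0 := by
  have h1 : IntegrableOn (fun s : ℝ => |s| ^ (-(1/2) : ℝ)) (Set.Icc 0 1) := by
    have := (intervalIntegral.intervalIntegrable_rpow' (a := 0) (b := 1) (r := (-(1/2) : ℝ)) (by norm_num))
    rw [intervalIntegrable_iff_integrableOn_Icc_of_le zero_le_one] at this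
    refine this.congr_fun (fun s hs => ?_) measurableSet_Icc
    simp only [abs_of_nonneg hs.1]
  have h2 : IntegrableOn (fun s : ℝ => |s| ^ (-(1/2) : ℝ)) (Set.Icc (-1) 0) := by
    have := h1.comp_neg
    simpa using this
  have h3 : IntegrableOn (fun s : ℝ => |s| ^ (-(1/2) : ℝ)) (Set.Icc (-1) 1) := by
    have := h2.union h1
    rwa [Set.Icc_union_Icc_eq_Icc (by norm_num) (by norm_num)] at this
  have h4 : ∫⁻ s in Set.Icc (-1:ℝ) 1, ENNReal.ofReal (|s| ^ (-(1/2) : ℝ)) ≠ ⊤ :=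
    h3.lintegral_lt_top.ne
  refine ⟨(∫⁻ s in Set.Icc (-1:ℝ) 1, ENNReal.ofReal (|s| ^ (-(1/2) : ℝ))).toReal, ENNReal.toReal_nonneg, fun a ha => ?_⟩
  rw [ENNReal.ofReal_toReal h4, ← lintegral_indicator measurableSet_Icc, ← lintegral_indicator measurableSet_Icc]
  rw [← lintegral_sub_right_eq_self (Set.indicator (Set.Icc (-1:ℝ) 1) _) a]
  refine lintegral_mono fun s => ?_
  by_cases hs : s ∈ Set.Icc (0:ℝ) 1
  · rw [Set.indicator_of_mem hs, Set.indicator_of_mem]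
    constructor <;> linarith [hs.1, hs.2, ha.1, ha.2]
  · rw [Set.indicator_of_notMem hs]; exact zero_le

lemma log_pt {w : ℂ} {B κ x y : ℝ} (hκ : 0 < κ) (hx : 0 < x) (hy : 0 < y)
    (hw : κ * (x * y) ≤ |w.re|) (hB : ‖w‖ ≤ B) :
    ‖Complex.log w‖ ≤ π + B + 4 * κ ^ (-(1/4) : ℝ) * (x ^ (-(1/2) : ℝ) + y ^ (-(1/2) : ℝ)) := by
  have hpos : 0 < κ * (x * y) := by positivity
  have hw' : κ * (x * y) ≤ ‖w‖ := hw.trans (Complex.abs_re_le_norm w)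
  have hwpos : 0 < ‖w‖ := hpos.trans_le hw'
  have h1 : ‖Complex.log w‖ ≤ |Real.log ‖w‖| + π := by
    refine (Complex.norm_le_abs_re_add_abs_im _).trans ?_
    rw [Complex.log_re, Complex.log_im]
    gcongr
    exact Complex.abs_arg_le_pi w
  have h2 : Real.log ‖w‖ ≤ B := (Real.log_le_self hwpos.le).trans hB
  have h3 : -Real.log ‖w‖ ≤ 4 * κ ^ (-(1/4) : ℝ) * (x ^ (-(1/2) : ℝ) + y ^ (-(1/2) : ℝ)) := by
    have a1 : -Real.log ‖w‖ ≤ -Real.log (κ * (x * y)) := neg_le_neg (Real.log_le_log hpos hw')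
    have a2 : -Real.log (κ * (x * y)) ≤ 4 * (κ * (x * y)) ^ (-(1/4) : ℝ) := by
      rw [← Real.log_inv]
      refine (Real.log_le_rpow_div (inv_nonneg.2 hpos.le) (show (0:ℝ) < 1/4 by norm_num)).trans ?_
      rw [Real.inv_rpow hpos.le, ← Real.rpow_neg hpos.le]
      linarith
    refine a1.trans (a2.trans ?_)
    rw [Real.mul_rpow hκ.le (by positivity), Real.mul_rpow hx.le hy.le, mul_assoc 4]
    have e : ∀ t : ℝ, 0 < t → t ^ (-(1/2) : ℝ) = t ^ (-(1/4) : ℝ) * t ^ (-(1/4) : ℝ) := by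
      intro t ht; rw [← Real.rpow_add ht]; norm_num
    rw [e x hx, e y hy]
    set X := x ^ (-(1/4) : ℝ)
    set Y := y ^ (-(1/4) : ℝ)
    have : X * Y ≤ X * X + Y * Y := by nlinarith [sq_nonneg (X - Y), sq_nonneg (X+Y)]
    gcongr
  have h4 : 0 ≤ 4 * κ ^ (-(1/4) : ℝ) * (x ^ (-(1/2) : ℝ) + y ^ (-(1/2) : ℝ)) := by positivity
  have h5 : 0 ≤ B := hwpos.le.trans hB
  have : |Real.log ‖w‖| ≤ B + 4 * κ ^ (-(1/4) : ℝ) * (x ^ (-(1/2) : ℝ) + y ^ (-(1/2) : ℝ)) := by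
    rw [abs_le]; constructor <;> linarith
  linarith

lemma rho_lip {ρ ρ' : ℝ → ℝ} {M : ℝ} (hM : 1 ≤ M) (hρ : ∀ t, HasDerivAt ρ (ρ' t) t)
    (hρ' : ∀ t, |ρ' t| ≤ M) (t s : ℝ) (hs : s ∈ Set.Icc (0:ℝ) 1) :
    |ρ (t + s * (ρ t / (2 * M))) - ρ t| ≤ |ρ t| / 2 := by
  have h := Convex.norm_image_sub_le_of_norm_deriv_le (f := ρ) (s := Set.univ) (C := M)
    (fun x _ => (hρ x).differentiableAt) (fun x _ => by rw [(hρ x).deriv]; exact hρ' x)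
    convex_univ (Set.mem_univ t) (Set.mem_univ (t + s * (ρ t / (2 * M))))
  rw [Real.norm_eq_abs, Real.norm_eq_abs] at h
  refine h.trans ?_
  rw [add_sub_cancel_left, abs_mul, abs_div, abs_of_nonneg hs.1, abs_of_pos (by positivity : 0 < 2 * M)]
  have : M * (s * (|ρ t| / (2 * M))) = s * (|ρ t| / 2) := by field_simp
  rw [this]
  have := abs_nonneg (ρ t)
  nlinarith [hs.2]

lemma oneD_inner (M B c0 : ℝ) (hM : 1 ≤ M) (hB : 0 ≤ B) (hc0 : 0 ≤ c0)
    (hc : ∀ a ∈ Set.Icc (0:ℝ) 1,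
      ∫⁻ s in Set.Icc (0:ℝ) 1, ENNReal.ofReal (|s - a| ^ (-(1/2) : ℝ)) ≤ ENNReal.ofReal c0)
    (w : ℝ → ℂ) (q : ℝ → ℝ) (η a b : ℝ) (hη : 0 < η) (hηM : η ≤ M)
    (ha : a ∈ Set.Icc (0:ℝ) 1) (hb : b ∈ Set.Icc (0:ℝ) 1)
    (hq : ∀ s ∈ Set.Icc (0:ℝ) 1, |q s| ≤ 2 * η)
    (hwB : ∀ s, ‖w s‖ ≤ B)
    (hw : ∀ s ∈ Set.Icc (0:ℝ) 1, η ^ 3 / (32 * M ^ 2) * (|s - a| * |s - b|) ≤ |(w s).re|) :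
    ∫⁻ s in Set.Icc (0:ℝ) 1, ENNReal.ofReal (|q s| * ‖Complex.log (w s)‖) ≤
      ENNReal.ofReal (2 * M * (π + B) + 512 * M ^ 3 * c0) := by
  set κ := η ^ 3 / (32 * M ^ 2) with hκ
  have hκ0 : 0 < κ := by positivity
  have hk : η * κ ^ (-(1/4) : ℝ) ≤ 32 * M ^ 3 := by
    have e1 : κ ^ (-(1/4) : ℝ) = (32 * M^2) ^ (1/4 : ℝ) * η ^ (-(3/4) : ℝ) := by
      rw [hκ, Real.div_rpow (by positivity) (by positivity), ← Real.rpow_natCast η 3,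
        ← Real.rpow_mul hη.le, Real.rpow_neg (by positivity : (0:ℝ) ≤ 32 * M^2), div_inv_eq_mul, mul_comm]
      norm_num
    have e2 : η * η ^ (-(3/4) : ℝ) = η ^ (1/4 : ℝ) := by
      nth_rewrite 1 [← Real.rpow_one η]
      rw [← Real.rpow_add hη]; norm_num
    have e3 : η ^ (1/4 : ℝ) ≤ M := by
      refine (Real.rpow_le_rpow hη.le hηM (by norm_num)).trans ?_
      nth_rewrite 2 [← Real.rpow_one M]
      exact Real.rpow_le_rpow_of_exponent_le hM (by norm_num)
    have hM2 : (1:ℝ) ≤ 32 * M^2 := by nlinarith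
    have e4 : (32 * M^2) ^ (1/4 : ℝ) ≤ 32 * M^2 := by
      nth_rewrite 2 [← Real.rpow_one (32 * M^2)]
      exact Real.rpow_le_rpow_of_exponent_le hM2 (by norm_num)
    calc η * κ ^ (-(1/4) : ℝ) = (32 * M^2) ^ (1/4 : ℝ) * (η * η ^ (-(3/4) : ℝ)) := by rw [e1]; ring
      _ ≤ (32 * M^2) * M := by rw [e2]; gcongr
      _ = _ := by ring
  have hae : ∀ᵐ s ∂(volume.restrict (Set.Icc (0:ℝ) 1)), ENNReal.ofReal (|q s| * ‖Complex.log (w s)‖)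
      ≤ ENNReal.ofReal (2 * M * (π + B)) + ENNReal.ofReal (256 * M ^ 3) *
        (ENNReal.ofReal (|s - a| ^ (-(1/2) : ℝ)) + ENNReal.ofReal (|s - b| ^ (-(1/2) : ℝ))) := by
    have hne : ∀ x : ℝ, ∀ᵐ s ∂(volume.restrict (Set.Icc (0:ℝ) 1)), s ≠ x :=
      fun x => ae_restrict_of_ae (Measure.ae_ne volume x)
    filter_upwards [hne a, hne b, ae_restrict_mem measurableSet_Icc] with s hsa hsb hs
    rw [← ENNReal.ofReal_add (by positivity) (by positivity), ← ENNReal.ofReal_mul (by positivity),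
      ← ENNReal.ofReal_add (by positivity) (by positivity)]
    apply ENNReal.ofReal_le_ofReal
    have hl := log_pt hκ0 (abs_pos.2 (sub_ne_zero.2 hsa)) (abs_pos.2 (sub_ne_zero.2 hsb)) (hw s hs) (hwB s)
    set X := |s - a| ^ (-(1/2) : ℝ)
    set Y := |s - b| ^ (-(1/2) : ℝ)
    have hX : 0 ≤ X := by positivity
    have hY : 0 ≤ Y := by positivity
    calc |q s| * ‖Complex.log (w s)‖ ≤ (2 * η) * (π + B + 4 * κ ^ (-(1/4) : ℝ) * (X + Y)) := by
          gcongr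
          exact hq s hs
      _ = 2 * η * (π + B) + 8 * (η * κ ^ (-(1/4) : ℝ)) * (X + Y) := by ring
      _ ≤ 2 * M * (π + B) + 8 * (32 * M ^ 3) * (X + Y) := by
          have := Real.pi_pos
          gcongr
      _ = _ := by ring
  refine (lintegral_mono_ae hae).trans ?_
  have hmeas : ∀ x : ℝ, Measurable fun s : ℝ => ENNReal.ofReal (|s - x| ^ (-(1/2) : ℝ)) := by
    intro x; fun_prop
  rw [lintegral_add_left measurable_const, lintegral_const_mul' _ _ ENNReal.ofReal_ne_top,
    lintegral_add_left (hmeas a), setLIntegral_const]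
  simp only [Real.volume_Icc, sub_zero, ENNReal.ofReal_one, mul_one]
  have hp := Real.pi_pos
  calc _ ≤ ENNReal.ofReal (2 * M * (π + B)) + ENNReal.ofReal (256 * M ^ 3) * (ENNReal.ofReal c0 + ENNReal.ofReal c0) := by
        gcongr
        · exact hc a ha
        · exact hc b hb
    _ = _ := by
        rw [← ENNReal.ofReal_add hc0 hc0, ← ENNReal.ofReal_mul (by positivity),
          ← ENNReal.ofReal_add (by positivity) (by positivity)]
        congr 1; ring

lemma oneD (M B : ℝ) (hM : 1 ≤ M) (hB : 0 ≤ B) : ∃ c : ℝ, 0 ≤ c ∧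
    ∀ (f ρ ρ' : ℝ → ℝ) (z : ℂ), z.im ≠ 0 → Continuous f → (∀ t, HasDerivAt ρ (ρ' t) t) →
      (∀ t, |ρ t| ≤ M) → (∀ t, |ρ' t| ≤ M) → (∀ t, ‖z - f t‖ ≤ B) →
      (∀ t, ρ t ≠ 0 → ∃ a b : ℝ, a ∈ Set.Icc (0:ℝ) 1 ∧ b ∈ Set.Icc (0:ℝ) 1 ∧
        ∀ s ∈ Set.Icc (0:ℝ) 1, |ρ t| ^ 3 / (32 * M ^ 2) * (|s - a| * |s - b|) ≤
          |(z - f (t + s * (ρ t / (2 * M)))).re|) →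
      ∫⁻ t in Set.Icc (0:ℝ) 1, ENNReal.ofReal (|ρ t| * ‖Complex.log (z - f t)‖) ≤ ENNReal.ofReal c := by
  obtain ⟨c0, hc0, hc⟩ := sing_int
  have hp := Real.pi_pos
  refine ⟨2 * (3 * (2 * M * (π + B) + 512 * M ^ 3 * c0)), by positivity, ?_⟩
  intro f ρ ρ' z hz hf hρ hρM hρ'M hfB hN
  set A := 2 * M * (π + B) + 512 * M ^ 3 * c0 with hA
  have hρc : Continuous ρ := continuous_iff_continuousAt.2 fun s => (hρ s).continuousAt
  have hslit : ∀ t, z - f t ∈ slitPlane := fun t => by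
    rw [mem_slitPlane_iff]; right; simpa using hz
  have hlogc : Continuous fun t => Complex.log (z - f t) :=
    Continuous.clog (by fun_prop) hslit
  set Φ : ℝ → ℝ≥0∞ := fun t => ENNReal.ofReal (|ρ t| * ‖Complex.log (z - f t)‖) with hΦ
  have hΦc : Continuous Φ := by
    apply ENNReal.continuous_ofReal.comp
    exact hρc.abs.mul hlogc.norm
  have hr : ∀ t, |ρ t / (2 * M)| ≤ 1/2 := by
    intro t
    rw [abs_div, abs_of_pos (by positivity : 0 < 2 * M), div_le_iff₀ (by positivity)]
    linarith [hρM t]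
  -- Step 1
  have step1 : ∀ s ∈ Set.Icc (0:ℝ) 1, ∫⁻ t in Set.Icc (0:ℝ) 1, Φ t ≤
      2 * ∫⁻ t in Set.Icc (-1:ℝ) 2, Φ (t + s * (ρ t / (2 * M))) := by
    intro s hs
    set φ : ℝ → ℝ := fun t => t + s * (ρ t / (2 * M)) with hφ
    have hφd : ∀ t, HasDerivAt φ (1 + s * (ρ' t / (2 * M))) t := fun t =>
      (hasDerivAt_id t).add (((hρ t).div_const (2 * M)).const_mul s)
    have hr' : ∀ t, |s * (ρ' t / (2 * M))| ≤ 1/2 := by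
      intro t
      rw [abs_mul, abs_of_nonneg hs.1, abs_div, abs_of_pos (by positivity : 0 < 2 * M)]
      have : |ρ' t| / (2 * M) ≤ 1/2 := by
        rw [div_le_iff₀ (by positivity)]; linarith [hρ'M t]
      have h0 : 0 ≤ |ρ' t| / (2 * M) := by positivity
      nlinarith [hs.1, hs.2]
    have hsr : ∀ t, |s * (ρ t / (2 * M))| ≤ 1/2 := by
      intro t
      rw [abs_mul, abs_of_nonneg hs.1]
      nlinarith [hs.1, hs.2, hr t, abs_nonneg (ρ t / (2 * M))]
    have hmono : StrictMono φ := by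
      apply strictMono_of_deriv_pos
      intro t
      rw [(hφd t).deriv]
      linarith [(abs_le.1 (hr' t)).1]
    have hφc : Continuous φ := by fun_prop
    have hsub : Set.Icc (0:ℝ) 1 ⊆ φ '' Set.Icc (-1:ℝ) 2 := by
      refine subset_trans ?_ (intermediate_value_Icc (by norm_num) hφc.continuousOn)
      apply Set.Icc_subset_Icc
      · simp only [hφ]; linarith [(abs_le.1 (hsr (-1))).2]
      · simp only [hφ]; linarith [(abs_le.1 (hsr 2)).1]
    calc ∫⁻ t in Set.Icc (0:ℝ) 1, Φ t ≤ ∫⁻ t in φ '' Set.Icc (-1:ℝ) 2, Φ t := lintegral_mono_set hsub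
      _ = ∫⁻ t in Set.Icc (-1:ℝ) 2, ENNReal.ofReal |1 + s * (ρ' t / (2 * M))| * Φ (φ t) :=
          lintegral_image_eq_lintegral_abs_deriv_mul measurableSet_Icc
            (fun t _ => (hφd t).hasDerivWithinAt) hmono.injective.injOn Φ
      _ ≤ ∫⁻ t in Set.Icc (-1:ℝ) 2, 2 * Φ (φ t) := by
          refine lintegral_mono fun t => ?_
          gcongr
          rw [show (2:ℝ≥0∞) = ENNReal.ofReal 2 by simp]
          apply ENNReal.ofReal_le_ofReal
          have := abs_le.1 (hr' t)
          rw [abs_le]; constructor <;> linarith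
      _ = _ := lintegral_const_mul _ (hΦc.comp hφc).measurable
  -- Step 2
  have step2 : ∀ t, ∫⁻ s in Set.Icc (0:ℝ) 1, Φ (t + s * (ρ t / (2 * M))) ≤ ENNReal.ofReal A := by
    intro t
    by_cases h0 : ρ t = 0
    · simp [hΦ, h0]
    obtain ⟨a, b, ha, hb, hab⟩ := hN t h0
    refine oneD_inner M B c0 hM hB hc0 hc (fun s => z - f (t + s * (ρ t / (2 * M))))
      (fun s => ρ (t + s * (ρ t / (2 * M)))) |ρ t| a b (abs_pos.2 h0) (hρM t) ha hb ?_ (fun s => hfB _) hab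
    intro s hs
    have := rho_lip hM hρ hρ'M t s hs
    have h2 := abs_sub_abs_le_abs_sub (ρ (t + s * (ρ t / (2 * M)))) (ρ t)
    linarith [abs_nonneg (ρ t)]
  calc ∫⁻ t in Set.Icc (0:ℝ) 1, Φ t = ∫⁻ s in Set.Icc (0:ℝ) 1, (∫⁻ t in Set.Icc (0:ℝ) 1, Φ t) := by
        rw [setLIntegral_const]; simp
    _ ≤ ∫⁻ s in Set.Icc (0:ℝ) 1, 2 * ∫⁻ t in Set.Icc (-1:ℝ) 2, Φ (t + s * (ρ t / (2 * M))) :=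
        setLIntegral_mono' measurableSet_Icc step1
    _ = 2 * ∫⁻ s in Set.Icc (0:ℝ) 1, ∫⁻ t in Set.Icc (-1:ℝ) 2, Φ (t + s * (ρ t / (2 * M))) :=
        lintegral_const_mul' _ _ (by simp)
    _ = 2 * ∫⁻ t in Set.Icc (-1:ℝ) 2, ∫⁻ s in Set.Icc (0:ℝ) 1, Φ (t + s * (ρ t / (2 * M))) := by
        rw [lintegral_lintegral_swap]
        apply Continuous.aemeasurable
        apply hΦc.comp
        fun_prop
    _ ≤ 2 * ∫⁻ t in Set.Icc (-1:ℝ) 2, ENNReal.ofReal A := by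
        gcongr with t
        exact step2 t
    _ = _ := by
        rw [setLIntegral_const, Real.volume_Icc, show (2:ℝ≥0∞) = ENNReal.ofReal 2 by simp,
          ← ENNReal.ofReal_mul (by positivity), ← ENNReal.ofReal_mul (by positivity)]
        congr 1; ring

/-- first-derivative instance -/
lemma oneD_fst (M B : ℝ) (hM : 1 ≤ M) (hB : 0 ≤ B) : ∃ c : ℝ, 0 ≤ c ∧
    ∀ (f f1 f2 : ℝ → ℝ) (z : ℂ), z.im ≠ 0 → (∀ t, HasDerivAt f (f1 t) t) →
      (∀ t, HasDerivAt f1 (f2 t) t) →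
      (∀ t, |f1 t| ≤ M) → (∀ t, |f2 t| ≤ M) → (∀ t, ‖z - f t‖ ≤ B) →
      ∫⁻ t in Set.Icc (0:ℝ) 1, ENNReal.ofReal (|f1 t| * ‖Complex.log (z - f t)‖) ≤ ENNReal.ofReal c := by
  obtain ⟨c, hc, h⟩ := oneD M B hM hB
  refine ⟨c, hc, fun f f1 f2 z hz h1 h2 b1 b2 hfB => ?_⟩
  have hfc : Continuous f := continuous_iff_continuousAt.2 fun s => (h1 s).continuousAt
  refine h f f1 f2 z hz hfc h2 b1 b2 hfB fun t h0 => ?_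
  set r := f1 t / (2 * M) with hr
  have hd : ∀ s, HasDerivAt (fun s => f (t + s * r) - z.re) (f1 (t + s * r) * r) s := by
    intro s
    have hl : HasDerivAt (fun s => t + s * r) r s := by
      simpa using ((hasDerivAt_id s).mul_const r).const_add t
    exact ((h1 (t + s * r)).comp s hl).sub_const _
  have hη := abs_pos.2 h0
  obtain ⟨a, b, ha, hb, hab⟩ := two_pts_mono (κ := |f1 t| ^ 3 / (8 * M ^ 2)) (by positivity) hd (by
    intro s hs
    have hl := rho_lip hM h2 b2 t s hs
    rw [← hr] at hl
    have hsq : f1 t ^ 2 / 2 ≤ f1 (t + s * r) * f1 t := by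
      have h3 := abs_le.1 hl
      have h4 : |(f1 (t + s * r) - f1 t) * f1 t| ≤ |f1 t| / 2 * |f1 t| := by
        rw [abs_mul]; gcongr
      have h5 : |f1 t| * |f1 t| = f1 t ^ 2 := by rw [← abs_mul, abs_of_nonneg (mul_self_nonneg _)]; ring
      have h6 := (abs_le.1 h4).1
      nlinarith
    have e : f1 (t + s * r) * r = (f1 (t + s * r) * f1 t) / (2 * M) := by rw [hr]; ring
    rw [e, div_le_div_iff₀ (by positivity) (by positivity)]
    have h7 : |f1 t| ^ 3 ≤ M * f1 t ^ 2 := by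
      rw [← sq_abs (f1 t), pow_succ, mul_comm]; gcongr; exact b1 t
    have : 0 < M := by linarith
    calc |f1 t| ^ 3 * (2 * M) ≤ M * f1 t ^ 2 * (2 * M) := by gcongr
      _ = f1 t ^ 2 / 2 * (4 * M ^ 2) := by ring
      _ ≤ f1 t ^ 2 / 2 * (8 * M ^ 2) := by gcongr; norm_num
      _ ≤ _ := by gcongr)
  refine ⟨a, b, ha, hb, fun s hs => ?_⟩
  have := hab s hs
  have e : (z - f (t + s * r)).re = -(f (t + s * r) - z.re) := by simp
  rw [e, abs_neg]
  refine le_trans (le_of_eq ?_) this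
  ring

/-- second-derivative instance -/
lemma oneD_snd (M B : ℝ) (hM : 1 ≤ M) (hB : 0 ≤ B) : ∃ c : ℝ, 0 ≤ c ∧
    ∀ (f f1 f2 f3 : ℝ → ℝ) (z : ℂ), z.im ≠ 0 → (∀ t, HasDerivAt f (f1 t) t) →
      (∀ t, HasDerivAt f1 (f2 t) t) → (∀ t, HasDerivAt f2 (f3 t) t) →
      (∀ t, |f2 t| ≤ M) → (∀ t, |f3 t| ≤ M) → (∀ t, ‖z - f t‖ ≤ B) →
      ∫⁻ t in Set.Icc (0:ℝ) 1, ENNReal.ofReal (|f2 t| * ‖Complex.log (z - f t)‖) ≤ ENNReal.ofReal c := by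
  obtain ⟨c, hc, h⟩ := oneD M B hM hB
  refine ⟨c, hc, fun f f1 f2 f3 z hz h1 h2 h3 b2 b3 hfB => ?_⟩
  have hfc : Continuous f := continuous_iff_continuousAt.2 fun s => (h1 s).continuousAt
  refine h f f2 f3 z hz hfc h3 b2 b3 hfB fun t h0 => ?_
  set r := f2 t / (2 * M) with hr
  have hη := abs_pos.2 h0
  have hl : ∀ s, HasDerivAt (fun s => t + s * r) r s := fun s => by
      simpa using ((hasDerivAt_id s).mul_const r).const_add t
  -- sign
  obtain ⟨σ, hσ, hσ2⟩ : ∃ σ : ℝ, |σ| = 1 ∧ σ * f2 t = |f2 t| := by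
    rcases le_total 0 (f2 t) with h | h
    · exact ⟨1, by simp, by rw [abs_of_nonneg h]; ring⟩
    · exact ⟨-1, by simp, by rw [abs_of_nonpos h]; ring⟩
  have hd : ∀ s, HasDerivAt (fun s => σ * (f (t + s * r) - z.re)) (σ * (f1 (t + s * r) * r)) s := by
    intro s
    exact (((h1 (t + s * r)).comp s (hl s)).sub_const _).const_mul σ
  have hd2 : ∀ s, HasDerivAt (fun s => σ * (f1 (t + s * r) * r)) (σ * (f2 (t + s * r) * r * r)) s := by
    intro s
    exact (((h2 (t + s * r)).comp s (hl s)).mul_const r).const_mul σ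
  obtain ⟨a, b, ha, hb, hab⟩ := two_pts_convex (κ := |f2 t| ^ 3 / (8 * M ^ 2)) (by positivity) hd hd2 (by
    intro s hs
    have hl := rho_lip hM h3 b3 t s hs
    rw [← hr] at hl
    have hsq : |f2 t| / 2 ≤ σ * f2 (t + s * r) := by
      have h4 : |σ * (f2 (t + s * r) - f2 t)| ≤ |f2 t| / 2 := by
        rw [abs_mul, hσ, one_mul]; exact hl
      have h6 := (abs_le.1 h4).1
      nlinarith
    have e : σ * (f2 (t + s * r) * r * r) = (σ * f2 (t + s * r)) * (|f2 t| ^ 2 / (4 * M ^ 2)) := by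
      rw [hr, sq_abs]; field_simp; ring
    rw [e]
    calc |f2 t| ^ 3 / (8 * M ^ 2) = |f2 t| / 2 * (|f2 t| ^ 2 / (4 * M ^ 2)) := by field_simp; ring
      _ ≤ _ := by gcongr)
  refine ⟨a, b, ha, hb, fun s hs => ?_⟩
  have := hab s hs
  have e : (z - f (t + s * r)).re = -(f (t + s * r) - z.re) := by simp
  rw [e, abs_neg]
  rw [abs_mul, hσ, one_mul] at this
  refine le_trans (le_of_eq ?_) this
  ring

end secD2

section secD3
/-- standard basis vector of `ℝ^d` -/
abbrev ev {d : ℕ} (j : Fin d) : Fin d → ℝ := Pi.single j 1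

lemma avg_line {d : ℕ} (Φ : (Fin d → ℝ) → ℝ≥0∞) (hΦ : Continuous Φ) (v : Fin d → ℝ) (hv : ‖v‖ ≤ 2)
    (c : ℝ≥0∞) (h : ∀ p, ∫⁻ t in Set.Icc (0:ℝ) 1, Φ (p + t • v) ≤ c) :
    ∫⁻ p in torusBox d, Φ p ≤ c * volume (Metric.closedBall (0 : Fin d → ℝ) (π + 2)) := by
  have hbox : MeasurableSet (torusBox d) := MeasurableSet.univ_pi fun _ => measurableSet_Icc
  have step : ∀ t ∈ Set.Icc (0:ℝ) 1, ∫⁻ p in torusBox d, Φ p ≤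
      ∫⁻ p in Metric.closedBall (0 : Fin d → ℝ) (π + 2), Φ (p + t • v) := by
    intro t ht
    rw [← lintegral_indicator hbox, ← lintegral_indicator Metric.isClosed_closedBall.measurableSet,
      ← lintegral_add_right_eq_self (Set.indicator (torusBox d) _) (t • v)]
    refine lintegral_mono fun p => ?_
    by_cases hp : p + t • v ∈ torusBox d
    · rw [Set.indicator_of_mem hp, Set.indicator_of_mem]
      rw [mem_closedBall_zero_iff]
      have h1 : ‖p + t • v‖ ≤ π := by
        rw [pi_norm_le_iff_of_nonneg Real.pi_pos.le]
        intro i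
        have := hp i (Set.mem_univ i)
        rw [Real.norm_eq_abs, abs_le]; exact this
      have h2 : ‖t • v‖ ≤ 2 := by
        rw [norm_smul, Real.norm_eq_abs, abs_of_nonneg ht.1]
        nlinarith [norm_nonneg v, ht.1, ht.2]
      calc ‖p‖ = ‖(p + t • v) - t • v‖ := by simp
        _ ≤ _ := (norm_sub_le _ _).trans (by linarith)
    · rw [Set.indicator_of_notMem hp]; exact zero_le
  calc ∫⁻ p in torusBox d, Φ p = ∫⁻ t in Set.Icc (0:ℝ) 1, ∫⁻ p in torusBox d, Φ p := by
        rw [setLIntegral_const]; simp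
    _ ≤ ∫⁻ t in Set.Icc (0:ℝ) 1, ∫⁻ p in Metric.closedBall (0 : Fin d → ℝ) (π + 2), Φ (p + t • v) :=
        setLIntegral_mono' measurableSet_Icc step
    _ = ∫⁻ p in Metric.closedBall (0 : Fin d → ℝ) (π + 2), ∫⁻ t in Set.Icc (0:ℝ) 1, Φ (p + t • v) := by
        rw [lintegral_lintegral_swap]
        apply Continuous.aemeasurable
        apply hΦ.comp
        fun_prop
    _ ≤ ∫⁻ p in Metric.closedBall (0 : Fin d → ℝ) (π + 2), c := lintegral_mono fun p => h p
    _ = _ := setLIntegral_const _ _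

section
variable {d : ℕ} {e : (Fin d → ℝ) → ℝ} {C : ℝ}

lemma bd0 (h : CmNormLe 3 e C) (p) : |e p| ≤ C := by
  have := h 0 (by norm_num) p Fin.elim0
  simpa using this

lemma bd1 (h : CmNormLe 3 e C) (p) (i : Fin d) : |fderiv ℝ e p (ev i)| ≤ C := by
  have := h 1 (by norm_num) p (fun _ => i)
  simpa using this

lemma bd2 (h : CmNormLe 3 e C) (p) (i j : Fin d) : |fderiv ℝ (fderiv ℝ e) p (ev i) (ev j)| ≤ C := by
  have := h 2 (by norm_num) p ![i, j]
  rw [iteratedFDeriv_two_apply] at this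
  simpa using this

lemma bd3 (h : CmNormLe 3 e C) (he : ContDiff ℝ 3 e) (p) (i j k : Fin d) :
    |fderiv ℝ (fderiv ℝ (fderiv ℝ e)) p (ev i) (ev j) (ev k)| ≤ C := by
  have := h 3 (by norm_num) p ![i, j, k]
  rw [iteratedFDeriv_succ_apply_right, iteratedFDeriv_two_apply] at this
  exact this

lemma cd1 (he : ContDiff ℝ 3 e) : ContDiff ℝ 2 (fderiv ℝ e) := he.fderiv_right (by norm_num)
lemma cd2 (he : ContDiff ℝ 3 e) : ContDiff ℝ 1 (fderiv ℝ (fderiv ℝ e)) := (cd1 he).fderiv_right (by norm_num)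

lemma line_deriv (p v : Fin d → ℝ) (t : ℝ) : HasDerivAt (fun t : ℝ => p + t • v) v t := by
  simpa using ((hasDerivAt_id t).smul_const v).const_add p

lemma hd1 (he : ContDiff ℝ 3 e) (p v : Fin d → ℝ) (t : ℝ) :
    HasDerivAt (fun t : ℝ => e (p + t • v)) (fderiv ℝ e (p + t • v) v) t :=
  ((he.differentiable (by norm_num)) (p + t • v)).hasFDerivAt.comp_hasDerivAt t (line_deriv p v t)

lemma hd2 (he : ContDiff ℝ 3 e) (p v : Fin d → ℝ) (t : ℝ) :
    HasDerivAt (fun t : ℝ => fderiv ℝ e (p + t • v) v) (fderiv ℝ (fderiv ℝ e) (p + t • v) v v) t := by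
  have := ((cd1 he).differentiable (by norm_num) (p + t • v)).hasFDerivAt.comp_hasDerivAt t (line_deriv p v t)
  simpa using this.clm_apply (hasDerivAt_const t v)

lemma hd3 (he : ContDiff ℝ 3 e) (p v : Fin d → ℝ) (t : ℝ) :
    HasDerivAt (fun t : ℝ => fderiv ℝ (fderiv ℝ e) (p + t • v) v v)
      (fderiv ℝ (fderiv ℝ (fderiv ℝ e)) (p + t • v) v v v) t := by
  have := ((cd2 he).differentiable (by norm_num) (p + t • v)).hasFDerivAt.comp_hasDerivAt t (line_deriv p v t)
  have h2 := this.clm_apply (hasDerivAt_const t v)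
  simpa using h2.clm_apply (hasDerivAt_const t v)

lemma norm_ev2 (j k : Fin d) : ‖ev j + ev k‖ ≤ 2 := by
  have h : ∀ i : Fin d, ‖ev i‖ ≤ 1 := by
    intro i; rw [Pi.norm_single]; simp
  linarith [norm_add_le (ev j) (ev k), h j, h k]

lemma log_cont (he : ContDiff ℝ 3 e) {z : ℂ} (hz : z.im ≠ 0) :
    Continuous fun p => Complex.log (z - e p) := by
  have := he.continuous
  refine Continuous.clog (by fun_prop) fun p => ?_
  rw [mem_slitPlane_iff]; right; simpa using hz

lemma D2_cont (he : ContDiff ℝ 3 e) (v w : Fin d → ℝ) :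
    Continuous fun p => fderiv ℝ (fderiv ℝ e) p v w :=
  ((cd2 he).continuous.clm_apply continuous_const).clm_apply continuous_const

lemma D1_cont (he : ContDiff ℝ 3 e) (v : Fin d → ℝ) :
    Continuous fun p => fderiv ℝ e p v :=
  ((cd1 he).continuous.clm_apply continuous_const)
end

lemma toReal_bd {d : ℕ} {c : ℝ} (hc : 0 ≤ c) : ENNReal.ofReal c * volume (Metric.closedBall (0 : Fin d → ℝ) (π + 2)) =
    ENNReal.ofReal (c * (volume (Metric.closedBall (0 : Fin d → ℝ) (π + 2))).toReal) := by
  rw [ENNReal.ofReal_mul hc, ENNReal.ofReal_toReal measure_closedBall_lt_top.ne]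

lemma log_grad (d : ℕ) (C B : ℝ) (hC : 1 ≤ C) (hB : 0 ≤ B) : ∃ c : ℝ, 0 ≤ c ∧
    ∀ e : (Fin d → ℝ) → ℝ, ContDiff ℝ 3 e → CmNormLe 3 e C → ∀ z : ℂ, z.im ≠ 0 →
      (∀ p, ‖z - e p‖ ≤ B) → ∀ k : Fin d,
      ∫⁻ p in torusBox d, ENNReal.ofReal (|fderiv ℝ e p (ev k)| * ‖Complex.log (z - e p)‖) ≤ ENNReal.ofReal c := by
  obtain ⟨c, hc, h⟩ := oneD_fst C B hC hB
  refine ⟨c * (volume (Metric.closedBall (0 : Fin d → ℝ) (π + 2))).toReal, by positivity, ?_⟩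
  intro e he hC3 z hz hzB k
  rw [← toReal_bd hc]
  refine avg_line _ ?_ (ev k) ?_ _ fun p => ?_
  · exact ENNReal.continuous_ofReal.comp ((D1_cont he _).abs.mul (log_cont he hz).norm)
  · rw [Pi.norm_single]; simp
  · exact h (fun t => e (p + t • ev k)) _ _ z hz (hd1 he p (ev k)) (hd2 he p (ev k))
      (fun t => bd1 hC3 _ _) (fun t => bd2 hC3 _ _ _) (fun t => hzB _)

lemma log_hess_diag (d : ℕ) (C B : ℝ) (hC : 1 ≤ C) (hB : 0 ≤ B) : ∃ c : ℝ, 0 ≤ c ∧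
    ∀ e : (Fin d → ℝ) → ℝ, ContDiff ℝ 3 e → CmNormLe 3 e C → ∀ z : ℂ, z.im ≠ 0 →
      (∀ p, ‖z - e p‖ ≤ B) → ∀ j k : Fin d,
      ∫⁻ p in torusBox d, ENNReal.ofReal (|fderiv ℝ (fderiv ℝ e) p (ev j + ev k) (ev j + ev k)| *
        ‖Complex.log (z - e p)‖) ≤ ENNReal.ofReal c := by
  obtain ⟨c, hc, h⟩ := oneD_snd (8 * C) B (by linarith) hB
  refine ⟨c * (volume (Metric.closedBall (0 : Fin d → ℝ) (π + 2))).toReal, by positivity, ?_⟩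
  intro e he hC3 z hz hzB j k
  rw [← toReal_bd hc]
  refine avg_line _ ?_ (ev j + ev k) (norm_ev2 j k) _ fun p => ?_
  · exact ENNReal.continuous_ofReal.comp ((D2_cont he _ _).abs.mul (log_cont he hz).norm)
  · refine h (fun t => e (p + t • (ev j + ev k))) _ _ _ z hz (hd1 he p _) (hd2 he p _) (hd3 he p _)
      (fun t => ?_) (fun t => ?_) (fun t => hzB _)
    · simp only [map_add, ContinuousLinearMap.add_apply]
      generalize p + t • (ev j + ev k) = q
      have a1 := abs_le.1 (bd2 hC3 q j j)
      have a2 := abs_le.1 (bd2 hC3 q j k)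
      have a3 := abs_le.1 (bd2 hC3 q k j)
      have a4 := abs_le.1 (bd2 hC3 q k k)
      rw [abs_le]; constructor <;> linarith [a1.1, a1.2, a2.1, a2.2, a3.1, a3.2, a4.1, a4.2]
    · simp only [map_add, ContinuousLinearMap.add_apply]
      generalize p + t • (ev j + ev k) = q
      have a1 := abs_le.1 (bd3 hC3 he q j j j)
      have a2 := abs_le.1 (bd3 hC3 he q j j k)
      have a3 := abs_le.1 (bd3 hC3 he q j k j)
      have a4 := abs_le.1 (bd3 hC3 he q j k k)
      have b1 := abs_le.1 (bd3 hC3 he q k j j)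
      have b2 := abs_le.1 (bd3 hC3 he q k j k)
      have b3 := abs_le.1 (bd3 hC3 he q k k j)
      have b4 := abs_le.1 (bd3 hC3 he q k k k)
      rw [abs_le]; constructor <;> linarith [a1.1, a1.2, a2.1, a2.2, a3.1, a3.2, a4.1, a4.2, b1.1, b1.2, b2.1, b2.2, b3.1, b3.2, b4.1, b4.2]

lemma log_hess (d : ℕ) (C B : ℝ) (hC : 1 ≤ C) (hB : 0 ≤ B) : ∃ c : ℝ, 0 ≤ c ∧
    ∀ e : (Fin d → ℝ) → ℝ, ContDiff ℝ 3 e → CmNormLe 3 e C → ∀ z : ℂ, z.im ≠ 0 →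
      (∀ p, ‖z - e p‖ ≤ B) → ∀ j k : Fin d,
      ∫⁻ p in torusBox d, ENNReal.ofReal (|fderiv ℝ (fderiv ℝ e) p (ev j) (ev k)| *
        ‖Complex.log (z - e p)‖) ≤ ENNReal.ofReal c := by
  obtain ⟨c, hc, h⟩ := log_hess_diag d C B hC hB
  refine ⟨c + c + c, by positivity, ?_⟩
  intro e he hC3 z hz hzB j k
  have hm : ∀ j k : Fin d, Measurable fun p => ENNReal.ofReal (|fderiv ℝ (fderiv ℝ e) p (ev j + ev k) (ev j + ev k)| *
        ‖Complex.log (z - e p)‖) := fun j k =>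
    (ENNReal.continuous_ofReal.comp ((D2_cont he _ _).abs.mul (log_cont he hz).norm)).measurable
  rw [ENNReal.ofReal_add (by positivity) hc, ENNReal.ofReal_add hc hc]
  refine le_trans ?_ (add_le_add (add_le_add (h e he hC3 z hz hzB j k) (h e he hC3 z hz hzB j j)) (h e he hC3 z hz hzB k k))
  rw [← lintegral_add_left (hm j k), ← lintegral_add_right _ (hm k k)]
  refine lintegral_mono fun p => ?_
  simp only
  rw [← ENNReal.ofReal_add (by positivity) (by positivity), ← ENNReal.ofReal_add (by positivity) (by positivity)]
  apply ENNReal.ofReal_le_ofReal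
  rw [← add_mul, ← add_mul]
  gcongr
  have hsym : fderiv ℝ (fderiv ℝ e) p (ev k) (ev j) = fderiv ℝ (fderiv ℝ e) p (ev j) (ev k) := by
    have : IsSymmSndFDerivAt ℝ e p := (he.contDiffAt).isSymmSndFDerivAt (by simp; norm_num)
    exact this _ _
  simp only [map_add, ContinuousLinearMap.add_apply, hsym]
  set X := fderiv ℝ (fderiv ℝ e) p (ev j) (ev k)
  set Y := fderiv ℝ (fderiv ℝ e) p (ev j) (ev j)
  set Z := fderiv ℝ (fderiv ℝ e) p (ev k) (ev k)
  have e1 := abs_le.1 (le_refl |Y + X + (X + Z)|)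
  have e2 := abs_le.1 (le_refl |Y + Y + (Y + Y)|)
  have e3 := abs_le.1 (le_refl |Z + Z + (Z + Z)|)
  have := abs_nonneg (Y + X + (X + Z))
  have := abs_nonneg (Y + Y + (Y + Y))
  have := abs_nonneg (Z + Z + (Z + Z))
  rw [abs_le]; constructor <;> linarith [e1.1, e1.2, e2.1, e2.2, e3.1, e3.2]

end secD3

section secA
open scoped ComplexConjugate Pointwise


local instance instMS : MeasureSpace UnitAddCircle := ⟨AddCircle.haarAddCircle⟩
local instance instHaar : Measure.IsAddHaarMeasure (volume : Measure UnitAddCircle) :=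
  inferInstanceAs (Measure.IsAddHaarMeasure AddCircle.haarAddCircle)
local instance instProb : IsProbabilityMeasure (volume : Measure UnitAddCircle) :=
  inferInstanceAs (IsProbabilityMeasure AddCircle.haarAddCircle)

/-- Fourier coefficients of a complex function. -/
def hatc {d : ℕ} (F : (Fin d → ℝ) → ℂ) (m : Γd d) : ℂ :=
  ((1 / (2 * π) ^ d : ℝ) : ℂ) *
    ∫ p in torusBox d, F p * Complex.exp (Complex.I * (dotZ p m : ℝ))

/-- point of the box corresponding to a torus point -/
def tpt {d : ℕ} (θ : UnitAddTorus (Fin d)) : Fin d → ℝ :=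
  fun i => -(2 * π) * (AddCircle.equivIoc 1 (-1/2 : ℝ) (θ i)).1

lemma tpt_meas {d : ℕ} : Measurable (tpt (d := d)) := by
  refine measurable_pi_lambda _ fun i => ?_
  refine Measurable.const_mul ?_ _
  exact measurable_subtype_coe.comp ((AddCircle.measurableEquivIoc 1 (-1/2 : ℝ)).measurable.comp (measurable_pi_apply i))

lemma integral_tpt {d : ℕ} (Q : (Fin d → ℝ) → ℂ) :
    ∫ θ : UnitAddTorus (Fin d), Q (tpt θ) = ((1 / (2 * π) ^ d : ℝ) : ℂ) * ∫ p in torusBox d, Q p := by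
  rw [UnitAddTorus.integral_preimage _ (fun _ => (-1/2 : ℝ))]
  have hS : MeasurableSet {x : Fin d → ℝ | ∀ i, x i ∈ Set.Ioc (-1/2 : ℝ) (-1/2 + 1)} :=
    MeasurableSet.univ_pi' (fun i => measurableSet_Ioc)
  have h1 : ∫ x in {x : Fin d → ℝ | ∀ i, x i ∈ Set.Ioc (-1/2 : ℝ) (-1/2 + 1)},
      Q (tpt (fun i => (x i : UnitAddCircle))) =
      ∫ x in {x : Fin d → ℝ | ∀ i, x i ∈ Set.Ioc (-1/2 : ℝ) (-1/2 + 1)}, Q ((-(2 * π)) • x) := by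
    refine setIntegral_congr_fun hS fun x hx => ?_
    congr 1
    funext i
    simp only [tpt, Pi.smul_apply, smul_eq_mul]
    rw [AddCircle.equivIoc_coe_of_mem (hx i)]
  rw [h1, Measure.setIntegral_comp_smul _ _ _ (by have := pi_pos; intro h; linarith)]
  have h2 : (-(2 * π)) • {x : Fin d → ℝ | ∀ i, x i ∈ Set.Ioc (-1/2 : ℝ) (-1/2 + 1)} =
      Set.univ.pi fun _ => Set.Ico (-π) π := by
    have hp := pi_pos
    ext x
    rw [Set.mem_smul_set_iff_inv_smul_mem₀ (by intro h; linarith)]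
    simp only [Set.mem_setOf_eq, Pi.smul_apply, smul_eq_mul, Set.mem_pi, Set.mem_univ, true_imp_iff, Set.mem_Ioc, Set.mem_Ico]
    refine forall_congr' fun i => ?_
    have e : (-(2 * π))⁻¹ * x i = - (x i) / (2 * π) := by field_simp
    rw [e, lt_div_iff₀ (by positivity), div_le_iff₀ (by positivity)]
    constructor <;> rintro ⟨h, h'⟩ <;> constructor <;> linarith
  rw [h2]
  have h3 : (Set.univ.pi fun _ : Fin d => Set.Ico (-π) π) =ᵐ[volume] torusBox d := by
    unfold torusBox
    rw [Set.pi_univ_Icc]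
    exact Measure.univ_pi_Ico_ae_eq_Icc
  rw [setIntegral_congr_set h3]
  simp only [Module.finrank_fintype_fun_eq_card, Fintype.card_fin, real_smul]
  congr 2
  rw [abs_inv, abs_pow, abs_neg, abs_of_pos (by positivity : 0 < 2 * π)]
  ring

lemma mFourier_tpt {d : ℕ} (n : Γd d) (θ : UnitAddTorus (Fin d)) :
    UnitAddTorus.mFourier (-n) θ = Complex.exp (Complex.I * (dotZ (tpt θ) n : ℝ)) := by
  have : ∀ i, θ i = ((AddCircle.equivIoc 1 (-1/2 : ℝ) (θ i)).1 : UnitAddCircle) := fun i =>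
    ((AddCircle.equivIoc 1 (-1/2 : ℝ)).symm_apply_apply (θ i)).symm
  simp only [UnitAddTorus.mFourier, ContinuousMap.coe_mk, dotZ, tpt]
  push_cast
  rw [Finset.mul_sum, Complex.exp_sum]
  refine Finset.prod_congr rfl fun i _ => ?_
  conv_lhs => rw [this i]
  rw [fourier_coe_apply]
  congr 1
  push_cast [Pi.neg_apply]
  ring

lemma lift_memLp {d : ℕ} {F : (Fin d → ℝ) → ℂ} (hF : Continuous F) :
    MemLp (fun θ => F (tpt θ)) 2 (volume : Measure (UnitAddTorus (Fin d))) := by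
  have hK : IsCompact (torusBox d) := isCompact_univ_pi fun _ => isCompact_Icc
  obtain ⟨M, hM⟩ := hK.exists_bound_of_continuousOn hF.continuousOn
  refine MemLp.of_bound (hF.measurable.comp tpt_meas).aestronglyMeasurable M (Filter.Eventually.of_forall fun θ => hM _ ?_)
  intro i _
  have := (AddCircle.equivIoc 1 (-1/2 : ℝ) (θ i)).2
  have hp := pi_pos
  simp only [tpt, Set.mem_Icc]
  constructor <;> nlinarith [this.1, this.2]

/-- Parseval. -/
lemma parseval {d : ℕ} {F G : (Fin d → ℝ) → ℂ} (hF : Continuous F) (hG : Continuous G) :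
    HasSum (fun n => conj (hatc F n) * hatc G n)
      (((1 / (2 * π) ^ d : ℝ) : ℂ) * ∫ p in torusBox d, conj (F p) * G p) := by
  have hc : ∀ {F : (Fin d → ℝ) → ℂ} (hF : Continuous F) (n),
      UnitAddTorus.mFourierCoeff ((lift_memLp hF).toLp _) n = hatc F n := by
    intro F hF n
    rw [hatc, ← integral_tpt, UnitAddTorus.mFourierCoeff]
    refine integral_congr_ae ?_
    filter_upwards [(lift_memLp hF).coeFn_toLp] with θ hθ
    rw [hθ, mFourier_tpt, smul_eq_mul, mul_comm]
  have h := UnitAddTorus.hasSum_prod_mFourierCoeff ((lift_memLp hF).toLp _) ((lift_memLp hG).toLp _)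
  simp only [hc hF, hc hG] at h
  convert h using 1
  rw [← integral_tpt]
  refine integral_congr_ae ?_
  filter_upwards [(lift_memLp hF).coeFn_toLp, (lift_memLp hG).coeFn_toLp] with θ h1 h2
  rw [h1, h2]

lemma hatc_memlp {d : ℕ} {F : (Fin d → ℝ) → ℂ} (hF : Continuous F) : Memℓp (hatc F) 2 := by
  refine memℓp_gen ?_
  have h := (Complex.hasSum_re (parseval hF hF)).summable
  convert h using 2 with n
  rw [mul_comm, Complex.mul_conj, Complex.ofReal_re, Complex.normSq_eq_norm_sq]
  norm_num

end secA

section secB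
open scoped ComplexConjugate Pointwise
lemma dotZ_cont {d : ℕ} (m : Γd d) : Continuous fun p => dotZ p m := by
  unfold dotZ; fun_prop

lemma integrableOn_box {d : ℕ} {F : (Fin d → ℝ) → ℂ} (hF : Continuous F) :
    IntegrableOn F (torusBox d) :=
  hF.continuousOn.integrableOn_compact (isCompact_univ_pi fun _ => isCompact_Icc)

lemma coord_eq {d : ℕ} (m : Γd d) (ψ : L2 d) : ⟪delta m, ψ⟫ = (ψ : ∀ _ : Γd d, ℂ) m := by
  unfold delta
  rw [lp.inner_single_left]
  simp

lemma expand {d : ℕ} (ψ : L2 d) : HasSum (fun n => (ψ : ∀ _ : Γd d, ℂ) n • delta n) ψ := by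
  have := lp.hasSum_single (p := 2) (by norm_num) ψ
  convert this using 2 with n
  unfold delta
  rw [← lp.single_smul]
  simp

lemma mult_apply {d : ℕ} {e : (Fin d → ℝ) → ℝ} (he : Continuous e) {H : L2 d →L[ℂ] L2 d}
    (hH : IsMultiplier e H) {φ : (Fin d → ℝ) → ℂ} (hφ : Continuous φ) (ψ : L2 d)
    (hψ : ∀ n, (ψ : ∀ _ : Γd d, ℂ) n = hatc φ n) (m : Γd d) :
    (H ψ : ∀ _ : Γd d, ℂ) m = hatc (fun p => (e p : ℂ) * φ p) m := by
  have h1 : HasSum (fun n => ⟪delta m, H ((ψ : ∀ _ : Γd d, ℂ) n • delta n)⟫) ⟪delta m, H ψ⟫ :=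
    ((innerSL ℂ (delta m)).comp H).hasSum (expand ψ)
  rw [coord_eq] at h1
  have hF : Continuous fun p : Fin d → ℝ => (e p : ℂ) * Complex.exp (-(Complex.I * (dotZ p m : ℝ))) := by
    have := dotZ_cont m
    fun_prop
  have h2 := parseval hF hφ
  have key : ∀ n, ⟪delta m, H ((ψ : ∀ _ : Γd d, ℂ) n • delta n)⟫ =
      conj (hatc (fun p : Fin d → ℝ => (e p : ℂ) * Complex.exp (-(Complex.I * (dotZ p m : ℝ)))) n) * hatc φ n := by
    intro n
    rw [map_smul, inner_smul_right, hH, hψ, mul_comm]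
    congr 1
    unfold hatc fCoeff
    rw [map_mul, Complex.conj_ofReal, ← integral_conj]
    congr 1
    refine integral_congr_ae (Filter.Eventually.of_forall fun p => ?_)
    simp only [map_mul, Complex.conj_ofReal, ← Complex.exp_conj, map_neg, Complex.conj_I]
    rw [mul_assoc, ← Complex.exp_add]
    congr 2
    have : dotZ p (m - n) = dotZ p m - dotZ p n := by
      simp [dotZ, mul_sub]
    rw [this]; push_cast; ring
  simp only [key] at h1
  rw [h1.unique h2]
  unfold hatc
  congr 1
  refine integral_congr_ae (Filter.Eventually.of_forall fun p => ?_)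
  simp only [map_mul, Complex.conj_ofReal, ← Complex.exp_conj, map_neg, Complex.conj_I]
  rw [neg_mul, neg_neg]; ring

lemma resolvent_inner {d : ℕ} {e : (Fin d → ℝ) → ℝ} (he : Continuous e) {H : L2 d →L[ℂ] L2 d}
    (hH : IsMultiplier e H) {z : ℂ} (hz : z.im ≠ 0) {R : L2 d →L[ℂ] L2 d}
    (hR : IsResolventAt H z R) {F G : (Fin d → ℝ) → ℂ} (hF : Continuous F) (hG : Continuous G)
    (f g : L2 d) (hf : ∀ n, (f : ∀ _ : Γd d, ℂ) n = hatc F n)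
    (hg : ∀ n, (g : ∀ _ : Γd d, ℂ) n = hatc G n) :
    ⟪f, R g⟫ = ((1 / (2 * π) ^ d : ℝ) : ℂ) * ∫ p in torusBox d, conj (F p) * (G p / (z - e p)) := by
  have hne : ∀ p, z - e p ≠ 0 := fun p h => hz (by simpa using congrArg Complex.im h)
  have hφ : Continuous fun p => G p / (z - e p) :=
    hG.div (by fun_prop) hne
  set φ := fun p => G p / (z - e p) with hφd
  let ψ : L2 d := ⟨hatc φ, hatc_memlp hφ⟩
  have hψ : ∀ n, (ψ : ∀ _ : Γd d, ℂ) n = hatc φ n := fun n => rfl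
  have hz1 : (z • (1 : L2 d →L[ℂ] L2 d) - H) ψ = g := by
    ext m
    have : ((z • (1 : L2 d →L[ℂ] L2 d) - H) ψ : ∀ _ : Γd d, ℂ) m =
      z * hatc φ m - (H ψ : ∀ _ : Γd d, ℂ) m := rfl
    rw [this, mult_apply he hH hφ ψ hψ, hg]
    unfold hatc
    rw [mul_left_comm, ← mul_sub]
    congr 1
    have hE : Continuous fun p : Fin d → ℝ => Complex.exp (Complex.I * (dotZ p m : ℝ)) := by
      have := dotZ_cont m
      fun_prop
    rw [← integral_const_mul, ← integral_sub]
    · refine integral_congr_ae (Filter.Eventually.of_forall fun p => ?_)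
      simp only [hφd]
      have := hne p
      field_simp
    · exact integrableOn_box ((hφ.mul hE).const_mul z)
    · exact integrableOn_box (((Complex.continuous_ofReal.comp he).mul hφ).mul hE)
  have hRg : R g = ψ := by
    have := DFunLike.congr_fun hR.1 ψ
    rw [← hz1]; simpa using this
  rw [hRg]
  refine HasSum.unique ?_ (parseval hF hφ)
  have := lp.hasSum_inner (𝕜 := ℂ) f ψ
  refine HasSum.congr_fun this fun n => ?_
  rw [RCLike.inner_apply, hf, hψ, mul_comm]

end secB

section secC
open scoped ComplexConjugate Pointwise
lemma int_deriv_zero {d : ℕ} (j : Fin d) (Q : (Fin d → ℝ) → ℂ) (hQ : ContDiff ℝ 1 Q)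
    (hper : ∀ p, Q (p + (2 * π) • ev j) = Q p) :
    ∫ p in torusBox d, fderiv ℝ Q p (ev j) = 0 := by
  obtain _ | n := d
  · exact j.elim0
  have hp := pi_pos
  have hb : torusBox (n + 1) = Set.Icc (fun _ => -π) (fun _ => π) := by
    unfold torusBox
    rw [Set.pi_univ_Icc]
  have hcont : Continuous fun p => fderiv ℝ Q p (ev j) :=
    (hQ.continuous_fderiv (by norm_num)).clm_apply continuous_const
  have h := integral_divergence_of_hasFDerivAt_off_countable' (n := n) (E := ℂ) (fun _ => -π) (fun _ => π)
    (by intro i; simp only; linarith) (fun i p => if i = j then Q p else 0)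
    (fun i p => if i = j then fderiv ℝ Q p else 0) ∅ Set.countable_empty
    (by
      intro i
      split_ifs
      · exact hQ.continuous.continuousOn
      · exact continuousOn_const)
    (by
      intro x _ i
      split_ifs
      · exact (hQ.differentiable (by norm_num) x).hasFDerivAt
      · exact hasFDerivAt_const _ _)
    (by
      refine Continuous.integrableOn_Icc ?_
      refine continuous_finsetSum _ fun i _ => ?_
      split_ifs with h
      · subst h; exact hcont
      · simp only [ContinuousLinearMap.zero_apply]; exact continuous_const)
  have e1 : ∀ p, (∑ i, (if i = j then fderiv ℝ Q p else 0) (Pi.single i 1)) = fderiv ℝ Q p (ev j) := by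
    intro p
    rw [Finset.sum_eq_single j]
    · simp
    · intro b _ hb; simp [hb]
    · simp
  simp only [e1] at h
  rw [hb, h]
  refine Finset.sum_eq_zero fun i _ => ?_
  by_cases hij : i = j
  · subst hij
    simp only [if_true]
    rw [sub_eq_zero]
    refine integral_congr_ae (Filter.Eventually.of_forall fun x => ?_)
    simp only
    rw [← hper (i.insertNth (-π) x)]
    congr 1
    funext k
    refine Fin.succAboveCases i ?_ (fun k => ?_) k
    · simp; ring
    · simp
  · simp [hij]

variable {d : ℕ} {e : (Fin d → ℝ) → ℝ}

lemma hasFDeriv_log (he : ContDiff ℝ 3 e) {z : ℂ} (hz : z.im ≠ 0) (p : Fin d → ℝ) (v) :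
    fderiv ℝ (fun p => Complex.log (z - e p)) p v = - (fderiv ℝ e p v : ℂ) / (z - e p) := by
  have h1 : HasFDerivAt e (fderiv ℝ e p) p := (he.differentiable (by norm_num) p).hasFDerivAt
  have h2 : HasFDerivAt (fun p => (e p : ℂ)) (Complex.ofRealCLM.comp (fderiv ℝ e p)) p :=
    Complex.ofRealCLM.hasFDerivAt.comp p h1
  have h3 := (h2.const_sub z)
  have hs : z - e p ∈ Complex.slitPlane := by
    rw [mem_slitPlane_iff]; right; simpa using hz
  have h4 := ((Complex.hasStrictDerivAt_log hs).hasDerivAt.hasFDerivAt.restrictScalars ℝ).comp p h3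
  have h5 := h4.fderiv
  simp only [Function.comp_def] at h5
  rw [h5]
  simp
  ring

lemma contDiff_log (he : ContDiff ℝ 3 e) {z : ℂ} (hz : z.im ≠ 0) :
    ContDiff ℝ 1 (fun p => Complex.log (z - e p)) := by
  rw [contDiff_iff_contDiffAt]
  intro p
  have hs : z - e p ∈ Complex.slitPlane := by
    rw [mem_slitPlane_iff]; right; simpa using hz
  have h1 : ContDiffAt ℝ 1 (fun p => z - (e p : ℂ)) p :=
    contDiffAt_const.sub (Complex.ofRealCLM.contDiff.contDiffAt.comp p (he.of_le (by norm_num)).contDiffAt)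
  exact ((Complex.contDiffAt_log (n := 1) hs).restrict_scalars ℝ).comp p h1

lemma ibp (he : ContDiff ℝ 3 e) {z : ℂ} (hz : z.im ≠ 0) (j : Fin d) {G : (Fin d → ℝ) → ℂ}
    (hG : ContDiff ℝ 1 G) (hep : ∀ p, e (p + (2 * π) • ev j) = e p)
    (hGp : ∀ p, G (p + (2 * π) • ev j) = G p) :
    ∫ p in torusBox d, (fderiv ℝ e p (ev j) : ℂ) * G p / (z - e p) =
      ∫ p in torusBox d, Complex.log (z - e p) * fderiv ℝ G p (ev j) := by
  have hL := contDiff_log he hz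
  have h0 := int_deriv_zero j (fun p => Complex.log (z - e p) * G p) (hL.mul hG)
    (fun p => by simp only [hep, hGp])
  have hne : ∀ p, z - (e p : ℂ) ≠ 0 := fun p h => hz (by simpa using congrArg Complex.im h)
  have hK : IsCompact (torusBox d) := isCompact_univ_pi fun _ => isCompact_Icc
  rw [← sub_eq_zero, ← neg_eq_zero, neg_sub, ← h0, ← integral_sub]
  · refine integral_congr_ae (Filter.Eventually.of_forall fun p => ?_)
    simp only
    have := fderiv_fun_mul (hL.differentiable (by norm_num) p) (hG.differentiable (by norm_num) p)
    rw [this]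
    simp only [ContinuousLinearMap.add_apply, ContinuousLinearMap.smul_apply, smul_eq_mul, hasFDeriv_log he hz]
    ring
  · refine ContinuousOn.integrableOn_compact hK (Continuous.continuousOn ?_)
    exact (log_cont he hz).mul ((hG.continuous_fderiv (by norm_num)).clm_apply continuous_const)
  · refine ContinuousOn.integrableOn_compact hK (Continuous.continuousOn ?_)
    have := he.continuous
    exact ((Complex.continuous_ofReal.comp (D1_cont he _)).mul hG.continuous).div (by fun_prop) hne

end secC

section secE
open scoped ComplexConjugate Pointwise
variable {d : ℕ} {e : (Fin d → ℝ) → ℝ}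

lemma fd_mul {a b : (Fin d → ℝ) → ℂ} (ha : ContDiff ℝ 1 a) (hb : ContDiff ℝ 1 b) (p v) :
    fderiv ℝ (fun p => a p * b p) p v = a p * fderiv ℝ b p v + fderiv ℝ a p v * b p := by
  rw [fderiv_fun_mul (ha.differentiable (by norm_num) p) (hb.differentiable (by norm_num) p)]
  simp only [add_apply, smul_apply, smul_eq_mul]
  ring

/-- complex valued partial derivative -/
def Dk (e : (Fin d → ℝ) → ℝ) (k : Fin d) (p : Fin d → ℝ) : ℂ := (fderiv ℝ e p (ev k) : ℂ)

/-- phase factor -/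
def Ex (m : Γd d) (p : Fin d → ℝ) : ℂ := Complex.exp (Complex.I * (dotZ p m : ℝ))

/-- linear factor -/
def Af (e : (Fin d → ℝ) → ℝ) (s : ℂ) (k : Fin d) (x : Γd d) (p : Fin d → ℝ) : ℂ :=
  s * Dk e k p + (x k : ℂ)

lemma cd1R (he : ContDiff ℝ 3 e) (k : Fin d) : ContDiff ℝ 1 (fun p => fderiv ℝ e p (ev k)) :=
  (he.fderiv_right (m := 1) (by norm_num)).clm_apply contDiff_const

lemma Dk_cd (he : ContDiff ℝ 3 e) (k : Fin d) : ContDiff ℝ 1 (Dk e k) :=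
  Complex.ofRealCLM.contDiff.comp (cd1R he k)

lemma Dk_fd (he : ContDiff ℝ 3 e) (k : Fin d) (p v) :
    fderiv ℝ (Dk e k) p v = ((fderiv ℝ (fderiv ℝ e) p v (ev k) : ℝ) : ℂ) := by
  have h1 : HasFDerivAt (fderiv ℝ e) (fderiv ℝ (fderiv ℝ e) p) p :=
    ((he.fderiv_right (m := 1) (by norm_num)).differentiable (by norm_num) p).hasFDerivAt
  have h2 := h1.clm_apply (hasFDerivAt_const (ev k) p)
  have h3 := (Complex.ofRealCLM.hasFDerivAt.comp p h2).fderiv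
  have h4 : Dk e k = ⇑Complex.ofRealCLM ∘ fun y => (fderiv ℝ e y) (ev k) := rfl
  rw [h4, h3]
  simp

lemma Ex_cd (m : Γd d) : ContDiff ℝ 1 (Ex m) := by
  have h : ContDiff ℝ 1 (fun p : Fin d → ℝ => dotZ p m) := by
    unfold dotZ
    refine ContDiff.sum fun i _ => ?_
    fun_prop
  have h2 : ContDiff ℝ 1 (fun p : Fin d → ℝ => ((dotZ p m : ℝ) : ℂ)) :=
    Complex.ofRealCLM.contDiff.comp h
  exact ContDiff.cexp (contDiff_const.mul h2)

lemma Ex_norm (m : Γd d) (p) : ‖Ex m p‖ = 1 := by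
  unfold Ex; rw [mul_comm]; exact Complex.norm_exp_ofReal_mul_I _

lemma dotZ_add (p q : Fin d → ℝ) (m : Γd d) : dotZ (p + q) m = dotZ p m + dotZ q m := by
  simp [dotZ, add_mul, Finset.sum_add_distrib]

lemma dotZ_smul_ev (t : ℝ) (j : Fin d) (m : Γd d) : dotZ (t • ev j) m = t * m j := by
  simp [dotZ, Pi.single_apply]

lemma Ex_fd (m : Γd d) (p) (j : Fin d) :
    fderiv ℝ (Ex m) p (ev j) = Ex m p * (Complex.I * (m j : ℂ)) := by
  have h1 : HasFDerivAt (Ex m) (fderiv ℝ (Ex m) p) p :=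
    ((Ex_cd m).differentiable (by norm_num) p).hasFDerivAt
  have h2 : HasDerivAt (fun t : ℝ => p + t • ev j) (ev j) 0 := by
    have := ((hasDerivAt_id (0:ℝ)).smul_const (ev j)).const_add p
    simpa using this
  have h3 : HasDerivAt (fun t : ℝ => Ex m (p + t • ev j)) (fderiv ℝ (Ex m) p (ev j)) 0 := by
    have h1' : HasFDerivAt (Ex m) (fderiv ℝ (Ex m) p) (p + (0:ℝ) • ev j) := by simpa using h1
    exact h1'.comp_hasDerivAt 0 h2
  have h4 : HasDerivAt (fun t : ℝ => Ex m (p + t • ev j)) (Ex m p * (Complex.I * (m j : ℂ))) 0 := by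
    have : ∀ t : ℝ, Ex m (p + t • ev j) = Complex.exp (Complex.I * (dotZ p m : ℝ) + (t : ℂ) * (Complex.I * (m j : ℂ))) := by
      intro t
      unfold Ex
      rw [dotZ_add, dotZ_smul_ev]; congr 1; push_cast; ring
    simp only [this]
    have h5 : HasDerivAt (fun t : ℝ => Complex.I * (dotZ p m : ℝ) + (t : ℂ) * (Complex.I * (m j : ℂ))) (Complex.I * (m j : ℂ)) 0 := by
      have := ((Complex.ofRealCLM.hasDerivAt (x := (0:ℝ))).mul_const (Complex.I * (m j : ℂ))).const_add (Complex.I * (dotZ p m : ℝ))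
      simpa using this
    have h6 := h5.cexp
    simpa [Ex] using h6
  exact h3.unique h4

lemma Af_cd (he : ContDiff ℝ 3 e) (s : ℂ) (k : Fin d) (x : Γd d) : ContDiff ℝ 1 (Af e s k x) :=
  (contDiff_const.mul (Dk_cd he k)).add contDiff_const

lemma Af_fd (he : ContDiff ℝ 3 e) (s : ℂ) (k : Fin d) (x : Γd d) (p v) :
    fderiv ℝ (Af e s k x) p v = s * ((fderiv ℝ (fderiv ℝ e) p v (ev k) : ℝ) : ℂ) := by
  have h : fderiv ℝ (Af e s k x) p = fderiv ℝ (fun p => s * Dk e k p) p := by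
    unfold Af
    rw [fderiv_add_const]
  rw [h, fd_mul contDiff_const (Dk_cd he k), Dk_fd he]
  simp

lemma abs_le_lnorm (x : Γd d) (k : Fin d) : |(x k : ℝ)| ≤ lnorm x := by
  unfold lnorm
  apply Real.abs_le_sqrt
  exact Finset.single_le_sum (f := fun i => (x i : ℝ)^2) (fun i _ => sq_nonneg _) (Finset.mem_univ k)

lemma lnorm_nonneg (x : Γd d) : 0 ≤ lnorm x := Real.sqrt_nonneg _

section bounds
variable {C : ℝ}

lemma Af_bd (hC : 1 ≤ C) (h3 : CmNormLe 3 e C) {s : ℂ} (hs : ‖s‖ ≤ 1) (k : Fin d) (x : Γd d) (p) : ‖Af e s k x p‖ ≤ C * (1 + lnorm x) := by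
  unfold Af
  have h1 : ‖s * Dk e k p‖ ≤ C := by
    rw [norm_mul, Dk, Complex.norm_real, Real.norm_eq_abs]
    have := bd1 h3 p k
    nlinarith [norm_nonneg s, abs_nonneg (fderiv ℝ e p (ev k))]
  have h2 : ‖(x k : ℂ)‖ ≤ lnorm x := by
    rw [← Complex.ofReal_intCast, Complex.norm_real]; exact abs_le_lnorm x k
  have := norm_add_le (s * Dk e k p) (x k : ℂ)
  nlinarith [lnorm_nonneg x]

lemma Af_fd_bd (hC : 1 ≤ C) (he : ContDiff ℝ 3 e) (h3 : CmNormLe 3 e C) {s : ℂ} (hs : ‖s‖ ≤ 1) (j k : Fin d) (x : Γd d) (p) :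
    ‖fderiv ℝ (Af e s k x) p (ev j)‖ ≤ C * (1 + lnorm x) := by
  rw [Af_fd he, norm_mul, Complex.norm_real, Real.norm_eq_abs]
  have := bd2 h3 p j k
  have h0 := abs_nonneg (fderiv ℝ (fderiv ℝ e) p (ev j) (ev k))
  nlinarith [norm_nonneg s, lnorm_nonneg x]

lemma G_fd_bd (hC : 1 ≤ C) (he : ContDiff ℝ 3 e) (h3 : CmNormLe 3 e C) {s t : ℂ} (hs : ‖s‖ ≤ 1) (ht : ‖t‖ ≤ 1) (j k : Fin d) (x y : Γd d) (p) :
    ‖fderiv ℝ (fun p => Dk e k p * (Af e s j x p * (Af e t k y p * Ex (x - y) p))) p (ev j)‖ ≤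
      (4 * C ^ 2 * ((1 + lnorm x) ^ 3 * (1 + lnorm y) ^ 3)) *
        (|fderiv ℝ e p (ev k)| + |fderiv ℝ (fderiv ℝ e) p (ev j) (ev k)|) := by
  rw [fd_mul (Dk_cd he k) ((Af_cd he s j x).mul ((Af_cd he t k y).mul (Ex_cd _))),
    fd_mul (Af_cd he s j x) ((Af_cd he t k y).mul (Ex_cd _)),
    fd_mul (Af_cd he t k y) (Ex_cd _), Dk_fd he, Ex_fd]
  set X := 1 + lnorm x with hX
  set Y := 1 + lnorm y with hY
  have hX1 : 1 ≤ X := by linarith [lnorm_nonneg x]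
  have hY1 : 1 ≤ Y := by linarith [lnorm_nonneg y]
  have a1 := Af_bd hC h3 hs j x p
  have a2 := Af_bd hC h3 ht k y p
  have a3 := Af_fd_bd hC he h3 hs j j x p
  have a4 := Af_fd_bd hC he h3 ht j k y p
  have a5 := Ex_norm (x - y) p
  have a6 : ‖Ex (x - y) p * (Complex.I * (((x - y) j : ℤ) : ℂ))‖ ≤ X + Y := by
    rw [norm_mul, a5, norm_mul, Complex.norm_I, one_mul, one_mul, ← Complex.ofReal_intCast,
      Complex.norm_real, Real.norm_eq_abs, Pi.sub_apply, Int.cast_sub]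
    have := abs_sub (x j : ℝ) (y j : ℝ)
    have := abs_le_lnorm x j
    have := abs_le_lnorm y j
    linarith
  set A := Af e s j x p
  set B := Af e t k y p
  set A' := fderiv ℝ (Af e s j x) p (ev j)
  set B' := fderiv ℝ (Af e t k y) p (ev j)
  set E := Ex (x - y) p
  set E' := Ex (x - y) p * (Complex.I * (((x - y) j : ℤ) : ℂ))
  have hD : ‖Dk e k p‖ = |fderiv ℝ e p (ev k)| := by
    rw [Dk, Complex.norm_real, Real.norm_eq_abs]
  rw [← hX, ← hY] at *
  have hXY : X * Y ≤ X ^ 3 * Y ^ 3 := by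
    calc X * Y = (X * Y) ^ 1 := by ring
      _ ≤ (X * Y) ^ 3 := pow_le_pow_right₀ (by nlinarith) (by norm_num)
      _ = _ := by ring
  have hXY2 : (X * Y) ^ 2 ≤ X ^ 3 * Y ^ 3 := by
    calc (X * Y) ^ 2 ≤ (X * Y) ^ 3 := pow_le_pow_right₀ (by nlinarith) (by norm_num)
      _ = _ := by ring
  have b1 : ‖B * E' + B' * E‖ ≤ C * Y * (X + Y) + C * Y := by
    refine (norm_add_le _ _).trans ?_
    rw [norm_mul B E', norm_mul B' E, a5, mul_one]
    gcongr
  have b2 : ‖A * (B * E' + B' * E) + A' * (B * E)‖ ≤ 4 * C ^ 2 * (X ^ 3 * Y ^ 3) := by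
    refine (norm_add_le _ _).trans ?_
    rw [norm_mul, norm_mul, norm_mul, a5, mul_one]
    have : ‖A‖ * ‖B * E' + B' * E‖ + ‖A'‖ * ‖B‖ ≤ C * X * (C * Y * (X + Y) + C * Y) + C * X * (C * Y) := by
      gcongr
    refine this.trans ?_
    have h5 : X + Y ≤ 2 * (X * Y) := by nlinarith
    have h6 : (X * Y) * (X + Y) ≤ 2 * (X * Y) ^ 2 := by nlinarith
    have : C * X * (C * Y * (X + Y) + C * Y) + C * X * (C * Y) = C ^ 2 * ((X * Y) * (X + Y) + 2 * (X * Y)) := by ring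
    rw [this]
    nlinarith [sq_nonneg C]
  have b3 : ‖A * (B * E)‖ ≤ 4 * C ^ 2 * (X ^ 3 * Y ^ 3) := by
    rw [norm_mul, norm_mul, a5, mul_one]
    have : ‖A‖ * ‖B‖ ≤ (C * X) * (C * Y) := by gcongr
    nlinarith [sq_nonneg C, mul_nonneg (sq_nonneg C) (by positivity : 0 ≤ X ^ 3 * Y ^ 3)]
  refine (norm_add_le _ _).trans ?_
  rw [norm_mul, norm_mul, hD, Complex.norm_real, Real.norm_eq_abs, mul_add (4 * C ^ 2 * (X ^ 3 * Y ^ 3)), mul_comm (|fderiv ℝ e p (ev k)|),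
    mul_comm (|fderiv ℝ (fderiv ℝ e) p (ev j) (ev k)|)]
  exact add_le_add (mul_le_mul_of_nonneg_right b2 (abs_nonneg _))
    (mul_le_mul_of_nonneg_right b3 (abs_nonneg _))
end bounds

lemma per_ev (hp : Periodic2pi e) (j : Fin d) (p) : e (p + (2 * π) • ev j) = e p := by
  have := hp p (Pi.single j 1)
  rw [← this]
  congr 2
  funext i
  by_cases h : i = j
  · subst h; simp
  · simp [h]

lemma fderiv_per (hp : Periodic2pi e) (j : Fin d) (p) :
    fderiv ℝ e (p + (2 * π) • ev j) = fderiv ℝ e p := by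
  have : (fun q => e (q + (2 * π) • ev j)) = e := funext (per_ev hp j)
  conv_rhs => rw [← this]
  rw [fderiv_comp_add_right]

lemma Ex_per (m : Γd d) (j : Fin d) (p) : Ex m (p + (2 * π) • ev j) = Ex m p := by
  unfold Ex
  rw [dotZ_add, dotZ_smul_ev]
  push_cast
  rw [mul_add, Complex.exp_add]
  have := Complex.exp_int_mul_two_pi_mul_I (m j)
  have h2 : Complex.I * (2 * π * (m j : ℂ)) = (m j : ℂ) * (2 * π * Complex.I) := by ring
  rw [h2, this, mul_one]

lemma jk_bound (d : ℕ) (C : ℝ) (hC : 1 ≤ C) : ∃ c : ℝ, 0 ≤ c ∧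
    ∀ e : (Fin d → ℝ) → ℝ, ContDiff ℝ 3 e → CmNormLe 3 e C → Periodic2pi e → ∀ z : ℂ, z.im ≠ 0 →
      ∀ s t : ℂ, ‖s‖ ≤ 1 → ‖t‖ ≤ 1 → ∀ (j k : Fin d) (x y : Γd d),
      ‖∫ p in torusBox d, Dk e j p * (Dk e k p * (Af e s j x p * (Af e t k y p * Ex (x - y) p))) / (z - e p)‖
        ≤ c * ((1 + lnorm x) ^ 3 * (1 + lnorm y) ^ 3) := by
  obtain ⟨c1, hc1, h1⟩ := log_grad d C (2 * C + 1) hC (by linarith)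
  obtain ⟨c2, hc2, h2⟩ := log_hess d C (2 * C + 1) hC (by linarith)
  have hK : IsCompact (torusBox d) := isCompact_univ_pi fun _ => isCompact_Icc
  refine ⟨C ^ 4 * (volume (torusBox d)).toReal + 4 * C ^ 2 * (c1 + c2), by positivity, ?_⟩
  intro e he h3 hp z hz s t hs ht j k x y
  set W := (1 + lnorm x) ^ 3 * (1 + lnorm y) ^ 3 with hW
  have hX1 : 1 ≤ 1 + lnorm x := by linarith [lnorm_nonneg x]
  have hY1 : 1 ≤ 1 + lnorm y := by linarith [lnorm_nonneg y]
  have hW0 : 0 ≤ W := by positivity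
  by_cases hzC : C + 1 ≤ ‖z‖
  · have hb : ∀ p ∈ torusBox d, ‖Dk e j p * (Dk e k p * (Af e s j x p * (Af e t k y p * Ex (x - y) p))) / (z - e p)‖ ≤ C ^ 4 * W := by
      intro p _
      have hzp : 1 ≤ ‖z - e p‖ := by
        have h5 := norm_sub_norm_le z (e p : ℂ)
        rw [Complex.norm_real, Real.norm_eq_abs] at h5
        linarith [bd0 h3 p]
      rw [norm_div]
      refine (div_le_self (norm_nonneg _) hzp).trans ?_
      rw [norm_mul, norm_mul, norm_mul, norm_mul, Ex_norm, mul_one, Dk, Dk, Complex.norm_real, Complex.norm_real,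
        Real.norm_eq_abs, Real.norm_eq_abs]
      have a1 := Af_bd hC h3 hs j x p
      have a2 := Af_bd hC h3 ht k y p
      have a3 := bd1 h3 p j
      have a4 := bd1 h3 p k
      have hC0 : 0 ≤ C := by linarith
      calc _ ≤ C * (C * ((C * (1 + lnorm x)) * (C * (1 + lnorm y)))) := by gcongr
        _ = C ^ 4 * ((1 + lnorm x) ^ 1 * (1 + lnorm y) ^ 1) := by ring
        _ ≤ C ^ 4 * W := by
          rw [hW]
          gcongr
          · norm_num
          · norm_num
    have := norm_setIntegral_le_of_norm_le_const (hK.measure_lt_top (μ := volume)) hb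
    refine this.trans ?_
    rw [measureReal_def]
    have : 0 ≤ 4 * C ^ 2 * (c1 + c2) * W := by positivity
    nlinarith
  · push Not at hzC
    have hzB : ∀ p, ‖z - e p‖ ≤ 2 * C + 1 := by
      intro p
      have h5 := norm_sub_le z (e p : ℂ)
      rw [Complex.norm_real, Real.norm_eq_abs] at h5
      linarith [bd0 h3 p]
    have hG : ContDiff ℝ 1 (fun p => Dk e k p * (Af e s j x p * (Af e t k y p * Ex (x - y) p))) :=
      (Dk_cd he k).mul ((Af_cd he s j x).mul ((Af_cd he t k y).mul (Ex_cd _)))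
    have hib := ibp he hz j hG (per_ev hp j) (by
      intro p
      simp only [Af, Dk, fderiv_per hp, Ex_per])
    have : (∫ p in torusBox d, Dk e j p * (Dk e k p * (Af e s j x p * (Af e t k y p * Ex (x - y) p))) / (z - e p)) = _ := hib
    rw [this]
    set M := 4 * C ^ 2 * W with hM
    have hM0 : 0 ≤ M := by positivity
    have hfin : ‖∫ p in torusBox d, Complex.log (z - e p) * fderiv ℝ (fun p => Dk e k p * (Af e s j x p * (Af e t k y p * Ex (x - y) p))) p (ev j)‖ₑ ≤
        ENNReal.ofReal (M * (c1 + c2)) := by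
      refine (enorm_integral_le_lintegral_enorm _).trans ?_
      calc _ ≤ ∫⁻ p in torusBox d, (ENNReal.ofReal M * (ENNReal.ofReal (|fderiv ℝ e p (ev k)| * ‖Complex.log (z - e p)‖) +
            ENNReal.ofReal (|fderiv ℝ (fderiv ℝ e) p (ev j) (ev k)| * ‖Complex.log (z - e p)‖))) := by
            refine lintegral_mono fun p => ?_
            rw [← ENNReal.ofReal_add (by positivity) (by positivity), ← ENNReal.ofReal_mul hM0,
              ← ofReal_norm_eq_enorm, norm_mul]
            apply ENNReal.ofReal_le_ofReal
            have := G_fd_bd hC he h3 hs ht j k x y p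
            rw [← hW, ← hM] at this
            calc _ ≤ ‖Complex.log (z - e p)‖ * (M * (|fderiv ℝ e p (ev k)| + |fderiv ℝ (fderiv ℝ e) p (ev j) (ev k)|)) := by gcongr
              _ = _ := by ring
        _ = ENNReal.ofReal M * ((∫⁻ p in torusBox d, ENNReal.ofReal (|fderiv ℝ e p (ev k)| * ‖Complex.log (z - e p)‖)) +
            ∫⁻ p in torusBox d, ENNReal.ofReal (|fderiv ℝ (fderiv ℝ e) p (ev j) (ev k)| * ‖Complex.log (z - e p)‖)) := by
            rw [lintegral_const_mul' _ _ ENNReal.ofReal_ne_top, lintegral_add_left]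
            exact (ENNReal.continuous_ofReal.comp ((D1_cont he _).abs.mul (log_cont he hz).norm)).measurable
        _ ≤ ENNReal.ofReal M * (ENNReal.ofReal c1 + ENNReal.ofReal c2) := by
            gcongr
            · exact h1 e he h3 z hz hzB k
            · exact h2 e he h3 z hz hzB j k
        _ = _ := by rw [← ENNReal.ofReal_add hc1 hc2, ← ENNReal.ofReal_mul hM0]
    rw [← ofReal_norm_eq_enorm, ENNReal.ofReal_le_ofReal_iff (by positivity)] at hfin
    refine hfin.trans ?_
    have : 0 ≤ C ^ 4 * (volume (torusBox d)).toReal * W := by positivity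
    rw [hM]
    nlinarith

end secE

section secF
open scoped ComplexConjugate Pointwise
lemma ghat_eq {d : ℕ} (e : (Fin d → ℝ) → ℝ) (x : Γd d) (p : Fin d → ℝ) :
    ghat e x p = (∑ k, Dk e k p * Af e (Complex.I / 2) k x p) * Complex.exp (-(Complex.I * (dotZ p x : ℝ))) := by
  unfold ghat gradSq pd Af Dk
  congr 1
  push_cast
  rw [Finset.mul_sum, ← Finset.sum_add_distrib]
  refine Finset.sum_congr rfl fun k _ => ?_
  ring

lemma ghat_cont {d : ℕ} {e : (Fin d → ℝ) → ℝ} (he : ContDiff ℝ 3 e) (x : Γd d) : Continuous (ghat e x) := by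
  have : ghat e x = fun p => (∑ k, Dk e k p * Af e (Complex.I / 2) k x p) * Complex.exp (-(Complex.I * (dotZ p x : ℝ))) :=
    funext (ghat_eq e x)
  rw [this]
  have h1 := dotZ_cont x
  refine Continuous.mul (continuous_finsetSum _ fun k _ => (Dk_cd he k).continuous.mul (Af_cd he _ k x).continuous) (by fun_prop)

lemma conj_ghat_mul {d : ℕ} (e : (Fin d → ℝ) → ℝ) (x y : Γd d) (z : ℂ) (p : Fin d → ℝ) :
    conj (ghat e x p) * (ghat e y p / (z - e p)) =
      ∑ j, ∑ k, Dk e j p * (Dk e k p * (Af e (-(Complex.I / 2)) j x p * (Af e (Complex.I / 2) k y p * Ex (x - y) p))) / (z - e p) := by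
  rw [ghat_eq, ghat_eq, map_mul, map_sum]
  have h1 : ∀ j, conj (Dk e j p * Af e (Complex.I / 2) j x p) = Dk e j p * Af e (-(Complex.I / 2)) j x p := by
    intro j
    have h2 : conj (Dk e j p) = Dk e j p := by unfold Dk; exact Complex.conj_ofReal _
    rw [map_mul, h2]
    unfold Af
    rw [map_add, map_mul, h2]
    have h5 : conj (Complex.I / 2) = -(Complex.I / 2) := by
      rw [map_div₀, Complex.conj_I, Complex.conj_ofNat, neg_div]
    rw [h5, map_intCast]
  have h3 : Ex (x - y) p = conj (Complex.exp (-(Complex.I * (dotZ p x : ℝ)))) * Complex.exp (-(Complex.I * (dotZ p y : ℝ))) := by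
    have : dotZ p (x - y) = dotZ p x - dotZ p y := by
      simp [dotZ, mul_sub]
    rw [Ex, this, ← Complex.exp_conj, ← Complex.exp_add]
    congr 1
    simp
    ring
  simp only [h1]
  rw [h3, div_eq_mul_inv _ (z - (e p : ℂ))]
  set E1 := conj (Complex.exp (-(Complex.I * (dotZ p x : ℝ))))
  set E2 := Complex.exp (-(Complex.I * (dotZ p y : ℝ)))
  have h4 : (∑ j, Dk e j p * Af e (-(Complex.I / 2)) j x p) * E1 *
      ((∑ k, Dk e k p * Af e (Complex.I / 2) k y p) * E2 * (z - e p)⁻¹) =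
      ((∑ j, Dk e j p * Af e (-(Complex.I / 2)) j x p) * (∑ k, Dk e k p * Af e (Complex.I / 2) k y p)) * (E1 * E2 * (z - e p)⁻¹) := by ring
  rw [h4, Finset.sum_mul_sum, Finset.sum_mul]
  refine Finset.sum_congr rfl fun j _ => ?_
  rw [Finset.sum_mul]
  refine Finset.sum_congr rfl fun k _ => ?_
  rw [div_eq_mul_inv]
  ring

lemma matrix_bound (d : ℕ) (C : ℝ) (hC : 1 ≤ C) : ∃ c : ℝ, 0 ≤ c ∧
    ∀ e : (Fin d → ℝ) → ℝ, ContDiff ℝ 3 e → CmNormLe 3 e C → Periodic2pi e →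
      ∀ g : Γd d → L2 d, IsGVec e g → ∀ H : L2 d →L[ℂ] L2 d, IsMultiplier e H →
      ∀ z : ℂ, z.im ≠ 0 → ∀ R : L2 d →L[ℂ] L2 d, IsResolventAt H z R → ∀ x y : Γd d,
      ‖⟪g x, R (g y)⟫‖ ≤ c * ((1 + lnorm x) ^ 3 * (1 + lnorm y) ^ 3) := by
  obtain ⟨c, hc, h⟩ := jk_bound d C hC
  refine ⟨(1 / (2 * π) ^ d) * (d * (d * c)), by positivity, ?_⟩
  intro e he h3 hp g hg H hH z hz R hR x y
  have hne : ∀ p, z - (e p : ℂ) ≠ 0 := fun p h => hz (by simpa using congrArg Complex.im h)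
  rw [resolvent_inner he.continuous hH hz hR (ghat_cont he x) (ghat_cont he y) (g x) (g y) (hg x) (hg y)]
  rw [norm_mul, Complex.norm_real, Real.norm_eq_abs, abs_of_nonneg (by positivity), mul_assoc]
  refine mul_le_mul_of_nonneg_left ?_ (by positivity)
  simp only [conj_ghat_mul]
  have hint : ∀ j k, IntegrableOn (fun p => Dk e j p * (Dk e k p * (Af e (-(Complex.I / 2)) j x p * (Af e (Complex.I / 2) k y p * Ex (x - y) p))) / (z - e p)) (torusBox d) := by
    intro j k
    refine integrableOn_box ?_
    have := he.continuous
    refine Continuous.div ?_ (by fun_prop) hne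
    exact (Dk_cd he j).continuous.mul ((Dk_cd he k).continuous.mul ((Af_cd he _ j x).continuous.mul ((Af_cd he _ k y).continuous.mul (Ex_cd _).continuous)))
  rw [integral_finsetSum _ (fun j _ => integrable_finsetSum _ fun k _ => hint j k)]
  have hb : ∀ j k, ‖∫ p in torusBox d, Dk e j p * (Dk e k p * (Af e (-(Complex.I / 2)) j x p * (Af e (Complex.I / 2) k y p * Ex (x - y) p))) / (z - e p)‖ ≤ c * ((1 + lnorm x) ^ 3 * (1 + lnorm y) ^ 3) := fun j k =>
    h e he h3 hp z hz _ _ (by simp; norm_num) (by simp; norm_num) j k x y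
  refine (norm_sum_le _ _).trans ?_
  refine (Finset.sum_le_card_nsmul _ _ (d * (c * ((1 + lnorm x) ^ 3 * (1 + lnorm y) ^ 3))) fun j _ => ?_).trans ?_
  · rw [integral_finsetSum _ (fun k _ => hint j k)]
    refine (norm_sum_le _ _).trans ?_
    refine (Finset.sum_le_card_nsmul _ _ _ fun k _ => hb j k).trans ?_
    simp
  · simp; apply le_of_eq; ring

lemma op_bound {d : ℕ} (T : L2 d →L[ℂ] L2 d) (c : ℝ) (hc : 0 ≤ c) (w : Γd d → ℝ) (hw : ∀ x, 0 ≤ w x)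
    (hs : Summable w) (h : ∀ x y, ‖⟪delta x, T (delta y)⟫‖ ≤ c * (w x * w y)) :
    ‖T‖ ≤ c * (∑' x, w x) ^ 2 := by
  have hS : 0 ≤ ∑' x, w x := tsum_nonneg hw
  set S := ∑' x, w x with hSd
  refine T.opNorm_le_bound (by positivity) fun ψ => ?_
  have h1 : ∀ x, ‖(T ψ : ∀ _ : Γd d, ℂ) x‖ ≤ c * w x * S * ‖ψ‖ := by
    intro x
    have hx : HasSum (fun n => ⟪delta x, T ((ψ : ∀ _ : Γd d, ℂ) n • delta n)⟫) ⟪delta x, T ψ⟫ :=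
      ((innerSL ℂ (delta x)).comp T).hasSum (expand ψ)
    have hy : HasSum (fun n => c * w x * w n * ‖ψ‖) (c * w x * S * ‖ψ‖) :=
      (hs.hasSum.mul_left _).mul_right _
    rw [← coord_eq, ← hx.tsum_eq]
    refine tsum_of_norm_bounded hy fun n => ?_
    rw [map_smul, inner_smul_right, norm_mul, mul_comm]
    refine mul_le_mul ((h x n).trans (by rw [mul_assoc])) (lp.norm_apply_le_norm (by norm_num) ψ n) (norm_nonneg _) ?_
    have := hw x; have := hw n; positivity
  have h2 : HasSum (fun n => (T ψ : ∀ _ : Γd d, ℂ) n • delta n) (T ψ) := expand (T ψ)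
  have h3 : HasSum (fun x => c * w x * S * ‖ψ‖) (c * S * S * ‖ψ‖) :=
    ((hs.hasSum.mul_left _).mul_right _).mul_right _
  have h4 := tsum_of_norm_bounded (f := fun n => (T ψ : ∀ _ : Γd d, ℂ) n • delta n) h3 (fun n => by
    rw [norm_smul]
    have : ‖(delta n : L2 d)‖ = 1 := by
      unfold delta; rw [lp.norm_single (by norm_num)]; simp
    rw [this, mul_one]
    exact h1 n)
  rw [h2.tsum_eq] at h4
  calc _ ≤ _ := h4
    _ = _ := by ring

end secF

/-- Weighted resolvent estimate
`‖V^{1/2} A (z-h(𝔢))⁻¹ A V^{1/2}‖ ≤ c Φ_{2,3}(V)`, via the vectors `g_x = A δ_x`. -/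
theorem statement10 (d : ℕ) (hd : 3 ≤ d) (K C : ℝ) (hK : 0 < K) :
    ∃ c : ℝ, ∀ e : (Fin d → ℝ) → ℝ,
      IsDispersion e → ContDiff ℝ 3 e → IsMorse e → MinCurvGe e K → CmNormLe 3 e C →
      ∀ g : Γd d → L2 d, IsGVec e g →
      ∀ Hop : L2 d →L[ℂ] L2 d, IsMultiplier e Hop →
      ∀ (V : Γd d → ℝ) (Vh : Γd d → ℂ), (∀ x, Vh x ^ 2 = (V x : ℂ)) →
      ∀ z : ℂ, z.im ≠ 0 → ∀ R : L2 d →L[ℂ] L2 d, IsResolventAt Hop z R →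
      ∀ T : L2 d →L[ℂ] L2 d,
        (∀ x y : Γd d,
          (⟪delta x, T (delta y)⟫ : ℂ) = Vh x * ⟪g x, R (g y)⟫ * Vh y) →
        (‖T‖₊ : ℝ≥0∞) ≤ ENNReal.ofReal c * Phi 2 3 V := by
  obtain ⟨c, hc, h⟩ := matrix_bound d (max C 1) (le_max_right _ _)
  refine ⟨c + 1, ?_⟩
  intro e hdis he _ _ h3 g hg Hop hH V Vh hV z hz R hR T hT
  have h3' : CmNormLe 3 e (max C 1) := fun j hj p k => (h3 j hj p k).trans (le_max_left _ _)
  have hm := h e he h3' hdis.1 g hg Hop hH z hz R hR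
  set w : Γd d → ℝ := fun x => |V x| ^ ((1 : ℝ) / (2 : ℕ)) * (1 + lnorm x) ^ 3 with hwd
  have hw : ∀ x, 0 ≤ w x := fun x => by have := lnorm_nonneg x; positivity
  have hVh : ∀ x, ‖Vh x‖ = |V x| ^ ((1 : ℝ) / (2 : ℕ)) := by
    intro x
    have := congrArg norm (hV x)
    rw [norm_pow, Complex.norm_real, Real.norm_eq_abs] at this
    rw [← this, one_div, Real.pow_rpow_inv_natCast (norm_nonneg _) (by norm_num)]
  have hPhi : Phi 2 3 V = (∑' x, ENNReal.ofReal (w x)) ^ 2 := rfl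
  rw [hPhi]
  by_cases hs : Summable w
  · rw [← ENNReal.ofReal_tsum_of_nonneg hw hs, ← ENNReal.ofReal_pow (tsum_nonneg hw),
      ← ENNReal.ofReal_mul (by positivity)]
    have hb := op_bound T (c + 1) (by positivity) w hw hs (fun x y => by
      rw [hT, norm_mul, norm_mul, hVh, hVh]
      have h5 := hm x y
      have a1 : 0 ≤ |V x| ^ ((1 : ℝ) / (2 : ℕ)) := by positivity
      have a2 : 0 ≤ |V y| ^ ((1 : ℝ) / (2 : ℕ)) := by positivity
      have := hw x
      have := hw y
      calc _ ≤ |V x| ^ ((1 : ℝ) / (2 : ℕ)) * (c * ((1 + lnorm x) ^ 3 * (1 + lnorm y) ^ 3)) * |V y| ^ ((1 : ℝ) / (2 : ℕ)) := by gcongr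
        _ = c * (w x * w y) := by simp only [hwd]; ring
        _ ≤ _ := by gcongr; linarith)
    have : (‖T‖₊ : ℝ≥0∞) = ENNReal.ofReal ‖T‖ := (ofReal_norm_eq_enorm T).symm
    rw [this]
    exact ENNReal.ofReal_le_ofReal hb
  · have : ∑' x, ENNReal.ofReal (w x) = ⊤ := by
      by_contra hne
      exact hs ((ENNReal.summable_toReal hne).congr fun x => ENNReal.toReal_ofReal (hw x))
    rw [this, ENNReal.top_pow (by norm_num), ENNReal.mul_top]
    · exact le_top
    · simp; linarith


end LatSch
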